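/- arXiv:0812.3359 — 11 statements merged into one kernel-verified Lean document; each statement's English description precedes it below -/
import Mathlib

section
/- Let f be an M-map with f(∅) ≠ 0, and define the M-map f^{-1*} by f^{-1*}(∅) = 1/f(∅) and, for nonempty a ⊆ Ω, f^{-1*}(a) = Σ_{p} |p|!·(−1)^{|p|}·(∏_{c ∈ p} f(c)) / f(∅)^{|p|+1}, where the sum runs over all set partitions p of a and |p| denotes the number of blocks of p. Then f * f^{-1*} = 1*, i.e. (f * f^{-1*})(∅) = 1 and (f * f^{-1*})(a) = 0 for every nonempty a ⊆ Ω. -/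
open Finset

/-- The convolution product of M-maps: `(f * g)(a) = ∑_{b ⊆ a} f(b) · g(a \ b)`. -/
noncomputable def MMap.conv {Ω : Type*} [DecidableEq Ω] (f g : Finset Ω → ℂ) : Finset Ω → ℂ :=
  fun a => ∑ b ∈ a.powerset, f b * g (a \ b)

/-- The M-map `1*`, with `1*(∅) = 1` and `1*(a) = 0` otherwise. -/
noncomputable def MMap.oneStar {Ω : Type*} [DecidableEq Ω] : Finset Ω → ℂ :=
  fun a => if a = ∅ then 1 else 0

/-- The explicit convolution inverse `f^{-1*}`: `f^{-1*}(∅) = 1/f(∅)` and, for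
nonempty `a`, `f^{-1*}(a) = ∑_p |p|!·(−1)^{|p|}·(∏_{c ∈ p} f(c))/f(∅)^{|p|+1}`,
summed over all set partitions `p` of `a`. -/
noncomputable def MMap.invStar {Ω : Type*} [DecidableEq Ω] (f : Finset Ω → ℂ) :
    Finset Ω → ℂ := fun a =>
  if a = ∅ then 1 / f ∅ else
    ∑ p : Finpartition a,
      (Nat.factorial p.parts.card : ℂ) * (-1 : ℂ) ^ p.parts.card * (∏ c ∈ p.parts, f c) /
        (f ∅) ^ (p.parts.card + 1)

theorem MMap.invStar_eq {Ω : Type*} [DecidableEq Ω] (f : Finset Ω → ℂ) (a : Finset Ω) :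
    MMap.invStar f a = ∑ p : Finpartition a,
      (Nat.factorial p.parts.card : ℂ) * (-1 : ℂ) ^ p.parts.card * (∏ c ∈ p.parts, f c) /
        (f ∅) ^ (p.parts.card + 1) := by
  unfold MMap.invStar
  split_ifs with h
  · subst h
    have : ∀ p : Finpartition (∅ : Finset Ω), p.parts = ∅ := fun p =>
      p.parts_eq_empty_iff.2 rfl
    have hc : Fintype.card (Finpartition (∅ : Finset Ω)) = 1 :=
      Fintype.card_eq_one_iff_nonempty_unique.2
        ⟨(inferInstance : Unique (Finpartition (⊥ : Finset Ω)))⟩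
    simp [this, hc]
  · rfl

theorem MMap.sum_part {Ω : Type*} [DecidableEq Ω] (a b : Finset Ω) (hb : b ≠ ∅) (hba : b ⊆ a)
    (g : Finset (Finset Ω) → ℂ) :
    ∑ p : Finpartition a with b ∈ p.parts, g (p.parts.erase b) =
      ∑ q : Finpartition (a \ b), g q.parts := by
  have hnot : ∀ q : Finpartition (a \ b), b ∉ q.parts := by
    intro q hq
    obtain ⟨x, hx⟩ := Finset.nonempty_iff_ne_empty.2 hb
    exact (Finset.mem_sdiff.1 (q.subset hq hx)).2 hx
  have key : ∀ p : Finpartition a, b ∈ p.parts → (p.avoid b).parts = p.parts.erase b := by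
    intro p hp
    ext c
    rw [Finpartition.mem_avoid, Finset.mem_erase]
    have hd : ∀ d ∈ p.parts, d ≠ b → d \ b = d := fun d hd h =>
      Finset.sdiff_eq_self_of_disjoint (p.disjoint hd hp h)
    constructor
    · rintro ⟨d, hd1, hd2, rfl⟩
      have hne : d ≠ b := fun h => hd2 h.le
      rw [hd d hd1 hne]
      exact ⟨hne, hd1⟩
    · rintro ⟨h1, h2⟩
      refine ⟨c, h2, fun hle => ?_, hd c h2 h1⟩
      have h3 := hd c h2 h1
      rw [Finset.sdiff_eq_empty_iff_subset.2 hle] at h3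
      exact p.ne_empty h2 h3.symm
  refine Finset.sum_bij' (fun p _ => p.avoid b)
    (fun q _ => q.extend (b := b) (c := a) hb Finset.sdiff_disjoint
      (Finset.sdiff_union_of_subset hba)) ?_ ?_ ?_ ?_ ?_
  · simp
  · simp
  · intro p hp
    have hp' : b ∈ p.parts := by simpa using hp
    ext1
    simp [key p hp', Finset.insert_erase hp']
  · intro q _
    ext1
    rw [key _ (by simp)]
    simp [Finset.erase_insert (hnot q)]
  · intro p hp
    have hp' : b ∈ p.parts := by simpa using hp
    simp [key p hp']

/-- If `f(∅) ≠ 0`, then the explicit partition formula `f^{-1*}` is a convolution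
inverse of `f`: `f * f^{-1*} = 1*`. -/
theorem mmap_conv_invStar {Ω : Type*} [DecidableEq Ω] [Fintype Ω]
    (f : Finset Ω → ℂ) (hf : f ∅ ≠ 0) :
    MMap.conv f (MMap.invStar f) = MMap.oneStar := by
  funext a
  unfold MMap.conv MMap.oneStar
  split_ifs with h
  · subst h
    simp [MMap.invStar, hf]
  rw [← Finset.add_sum_erase _ _ (Finset.empty_mem_powerset a), Finset.sdiff_empty]
  have h2 : ∑ b ∈ a.powerset.erase ∅, f b * MMap.invStar f (a \ b) =
      ∑ b ∈ a.powerset.erase ∅, ∑ p : Finpartition a with b ∈ p.parts,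
        f b * ((Nat.factorial (p.parts.erase b).card : ℂ) * (-1 : ℂ) ^ (p.parts.erase b).card *
          (∏ c ∈ p.parts.erase b, f c) / (f ∅) ^ ((p.parts.erase b).card + 1)) := by
    refine Finset.sum_congr rfl fun b hb => ?_
    rw [Finset.mem_erase, Finset.mem_powerset] at hb
    rw [MMap.invStar_eq, Finset.mul_sum]
    exact (MMap.sum_part a b hb.1 hb.2 fun P => f b * ((Nat.factorial P.card : ℂ) *
      (-1 : ℂ) ^ P.card * (∏ c ∈ P, f c) / (f ∅) ^ (P.card + 1))).symm
  rw [h2, Finset.sum_comm' (t' := Finset.univ) (s' := fun p : Finpartition a => p.parts),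
    MMap.invStar_eq, Finset.mul_sum, ← Finset.sum_add_distrib]
  · refine Finset.sum_eq_zero fun p _ => ?_
    obtain ⟨n, hn⟩ : ∃ n, p.parts.card = n + 1 :=
      Nat.exists_eq_succ_of_ne_zero (Finset.card_pos.2 (p.parts_nonempty h)).ne'
    have h3 : ∀ b ∈ p.parts,
        f b * ((Nat.factorial (p.parts.erase b).card : ℂ) * (-1 : ℂ) ^ (p.parts.erase b).card *
          (∏ c ∈ p.parts.erase b, f c) / (f ∅) ^ ((p.parts.erase b).card + 1)) =
        (Nat.factorial n : ℂ) * (-1) ^ n * (∏ c ∈ p.parts, f c) / (f ∅) ^ (n + 1) := by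
      intro b hb
      rw [Finset.card_erase_of_mem hb, hn, ← Finset.mul_prod_erase _ _ hb]
      simp only [Nat.add_sub_cancel]
      ring
    rw [Finset.sum_congr rfl h3, Finset.sum_const, hn, Nat.factorial_succ, nsmul_eq_mul]
    push_cast
    field_simp
    ring
  · intro b p
    simp only [Finset.mem_erase, Finset.mem_powerset, Finset.mem_filter, Finset.mem_univ,
      true_and, and_true]
    exact ⟨fun h => h.2, fun h => ⟨⟨p.ne_empty h, p.subset h⟩, h⟩⟩
end

section
/- Let f and g be M-maps with f(∅) ≠ 0 and g(∅) ≠ 0. Then for every nonempty subset a ⊆ Ω, the cumulant of the convolution product is additive: log*(f * g)(a) = log* f(a) + log* g(a). -/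
open Finset

/-- The cumulant `log* f` on nonempty subsets:
`log* f(a) = ∑_p (|p|−1)!·(−1)^{|p|−1}·(∏_{c ∈ p} f(c))/f(∅)^{|p|}`,
summed over all set partitions `p` of `a`, `|p|` being the number of blocks. -/
noncomputable def MMap.logStar {Ω : Type*} [DecidableEq Ω] (f : Finset Ω → ℂ) :
    Finset Ω → ℂ := fun a =>
  ∑ p : Finpartition a,
    (Nat.factorial (p.parts.card - 1) : ℂ) * (-1 : ℂ) ^ (p.parts.card - 1) *
      (∏ c ∈ p.parts, f c) / (f ∅) ^ p.parts.card

namespace MMapAux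

variable {Ω : Type*} [DecidableEq Ω]

lemma sum_extend (a c : Finset Ω) (hc : c ⊆ a) (hne : c ≠ ∅) (F : Finset (Finset Ω) → ℂ) :
    ∑ p : Finpartition (a \ c), F p.parts
      = ∑ q : Finpartition a with c ∈ q.parts, F (q.parts.erase c) := by
  have hcn : ∀ p : Finpartition (a \ c), c ∉ p.parts := by
    intro p hp
    obtain ⟨y, hy⟩ := Finset.nonempty_iff_ne_empty.2 hne
    have := p.subset hp hy
    simp [hy] at this
  refine Finset.sum_bij
    (fun p _ => p.extend (b := c) (c := a) hne disjoint_sdiff_self_left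
      (by simpa using hc)) ?_ ?_ ?_ ?_
  · intro p _
    simp [Finpartition.extend]
  · intro p _ q _ h
    have h2 := congrArg (fun r => r.parts.erase c) h
    simp only [Finpartition.extend, Finset.erase_insert (hcn p), Finset.erase_insert (hcn q)] at h2
    exact Finpartition.ext h2
  · intro q hq
    have hq : c ∈ q.parts := by simpa using hq
    refine ⟨q.ofSubset (b := a \ c) (Finset.erase_subset c q.parts) ?_, Finset.mem_univ _, ?_⟩
    · ext y
      simp only [Finset.mem_sup, Finset.mem_erase, id, Finset.mem_sdiff]
      constructor
      · rintro ⟨t, ⟨htc, ht⟩, hy⟩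
        exact ⟨q.subset ht hy, fun hyc => htc (q.eq_of_mem_parts ht hq hy hyc)⟩
      · rintro ⟨hy, hyc⟩
        obtain ⟨t, ht, hyt⟩ := q.exists_mem hy
        exact ⟨t, ⟨fun h => hyc (h ▸ hyt), ht⟩, hyt⟩
    · apply Finpartition.ext
      simp [Finpartition.extend, Finpartition.ofSubset, Finset.insert_erase hq]
  · intro p _
    simp [Finpartition.extend, Finset.erase_insert (hcn p)]

lemma logStar_rec (f : Finset Ω → ℂ) (hf : f ∅ ≠ 0) (a : Finset Ω) (x : Ω) (hx : x ∈ a) :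
    ∑ c ∈ (a.erase x).powerset, MMap.logStar f (a \ c) * f c = f a := by
  have hane : a ≠ ⊥ := by
    rintro rfl
    simp at hx
  rw [← Finset.add_sum_erase _ _ (Finset.empty_mem_powerset (a.erase x))]
  let W : Finset (Finset Ω) → ℂ := fun P =>
    (Nat.factorial (P.card - 1) : ℂ) * (-1 : ℂ) ^ (P.card - 1) *
      (∏ c ∈ P, f c) / (f ∅) ^ P.card
  have hL : ∀ b, MMap.logStar f b = ∑ p : Finpartition b, W p.parts := fun b => rfl
  have h1 : ∑ c ∈ (a.erase x).powerset.erase ∅, MMap.logStar f (a \ c) * f c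
      = ∑ q : Finpartition a, ∑ c ∈ q.parts.erase (q.part x), W (q.parts.erase c) * f c := by
    have : ∀ c ∈ (a.erase x).powerset.erase ∅, MMap.logStar f (a \ c) * f c
        = ∑ q : Finpartition a with c ∈ q.parts, W (q.parts.erase c) * f c := by
      intro c hc
      simp only [Finset.mem_erase, Finset.mem_powerset] at hc
      rw [hL, sum_extend a c (hc.2.trans (Finset.erase_subset _ _)) hc.1, Finset.sum_mul]
    rw [Finset.sum_congr rfl this]
    refine Finset.sum_comm' ?_
    intro c q
    simp only [Finset.mem_erase, Finset.mem_powerset, Finset.mem_filter, Finset.mem_univ, true_and,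
      and_true, Finset.subset_erase]
    constructor
    · rintro ⟨⟨hne, hca, hxc⟩, hcq⟩
      refine ⟨?_, hcq⟩
      rintro rfl
      exact hxc (q.mem_part_self.2 hx)
    · rintro ⟨hne, hcq⟩
      exact ⟨⟨q.ne_empty hcq, q.subset hcq, fun h => hne (q.part_eq_of_mem hcq h).symm⟩, hcq⟩
  rw [h1, Finset.sdiff_empty, hL, Finset.sum_mul, ← Finset.sum_add_distrib]
  have h2 : ∀ q : Finpartition a, W q.parts * f ∅
      + ∑ c ∈ q.parts.erase (q.part x), W (q.parts.erase c) * f c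
      = if q = Finpartition.indiscrete hane then f a else 0 := by
    intro q
    have hpx : q.part x ∈ q.parts := q.part_mem.2 hx
    have hcard : q.parts.card ≠ 0 := Finset.card_ne_zero_of_mem hpx
    obtain ⟨n, hn⟩ := Nat.exists_eq_succ_of_ne_zero hcard
    have h3 : ∀ c ∈ q.parts.erase (q.part x), W (q.parts.erase c) * f c
        = (Nat.factorial (n - 1) : ℂ) * (-1 : ℂ) ^ (n - 1) *
      (∏ c ∈ q.parts, f c) / (f ∅) ^ n := by
      intro c hc
      have hc' := Finset.mem_of_mem_erase hc
      have : (q.parts.erase c).card = n := by rw [Finset.card_erase_of_mem hc', hn]; rfl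
      simp only [W, this]
      rw [← Finset.prod_erase_mul _ _ hc']
      ring
    rw [Finset.sum_congr rfl h3, Finset.sum_const, Finset.card_erase_of_mem hpx, hn]
    simp only [W, hn, Nat.succ_eq_add_one, Nat.add_sub_cancel, nsmul_eq_mul]
    rcases n with _ | m
    · obtain ⟨t, ht⟩ := Finset.card_eq_one.1 hn
      have hta : t = a := by
        have := q.sup_parts
        rw [ht] at this
        simpa using this
      subst hta
      rw [if_pos]
      · simp [ht, hf]
      · apply Finpartition.ext
        rw [ht]; rfl
    · rw [if_neg]
      · simp only [Nat.add_sub_cancel, Nat.factorial_succ]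
        push_cast
        field_simp
        ring
      · rintro rfl
        simp [Finpartition.indiscrete] at hn
  rw [Finset.sum_congr rfl (fun q _ => h2 q)]
  simp

lemma uniq (h K K' : Finset Ω → ℂ) (h0 : h ∅ ≠ 0) (x : Ω)
    (H : ∀ a, x ∈ a → ∑ c ∈ (a.erase x).powerset, K (a \ c) * h c = h a)
    (H' : ∀ a, x ∈ a → ∑ c ∈ (a.erase x).powerset, K' (a \ c) * h c = h a)
    (a : Finset Ω) (hx : x ∈ a) : K a = K' a := by
  induction a using Finset.strongInduction with
  | H a ih =>
    have e := (H a hx).trans (H' a hx).symm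
    rw [← Finset.add_sum_erase _ _ (Finset.empty_mem_powerset (a.erase x)),
      ← Finset.add_sum_erase _ (fun c => K' (a \ c) * h c)
        (Finset.empty_mem_powerset (a.erase x))] at e
    have e2 : ∑ c ∈ (a.erase x).powerset.erase ∅, K (a \ c) * h c
        = ∑ c ∈ (a.erase x).powerset.erase ∅, K' (a \ c) * h c := by
      refine Finset.sum_congr rfl fun c hc => ?_
      simp only [Finset.mem_erase, Finset.mem_powerset, Finset.subset_erase] at hc
      rw [ih (a \ c) (Finset.sdiff_ssubset hc.2.1 (Finset.nonempty_iff_ne_empty.2 hc.1))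
        (Finset.mem_sdiff.2 ⟨hx, hc.2.2⟩)]
    rw [e2] at e
    have e3 := add_right_cancel e
    simpa [h0] using e3

lemma sum_reindex (S : Finset Ω) (F : Finset Ω → Finset Ω → ℂ) :
    ∑ e ∈ S.powerset, ∑ c ∈ e.powerset, F c (e \ c)
      = ∑ d ∈ S.powerset, ∑ c ∈ (S \ d).powerset, F c d := by
  rw [Finset.sum_sigma', Finset.sum_sigma']
  refine Finset.sum_bij' (fun p _ => ⟨p.1 \ p.2, p.2⟩) (fun p _ => ⟨p.1 ∪ p.2, p.2⟩) ?_ ?_ ?_ ?_ ?_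
  · rintro ⟨e, c⟩ h
    simp only [Finset.mem_sigma, Finset.mem_powerset] at h ⊢
    grind
  · rintro ⟨e, c⟩ h
    simp only [Finset.mem_sigma, Finset.mem_powerset] at h ⊢
    grind
  · rintro ⟨e, c⟩ h
    simp only [Finset.mem_sigma, Finset.mem_powerset] at h ⊢
    rw [Finset.sdiff_union_of_subset h.2]
  · rintro ⟨e, c⟩ h
    simp only [Finset.mem_sigma, Finset.mem_powerset] at h ⊢
    have : (e ∪ c) \ c = e := by grind
    rw [this]
  · rintro ⟨e, c⟩ h
    rfl

lemma conv_comm (f g : Finset Ω → ℂ) : MMap.conv f g = MMap.conv g f := by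
  funext a
  unfold MMap.conv
  refine Finset.sum_bij' (fun b _ => a \ b) (fun b _ => a \ b) ?_ ?_ ?_ ?_ ?_
  · intro b _; simp
  · intro b _; simp
  · intro b hb; simpa using hb
  · intro b hb; simpa using hb
  · intro b hb
    have : a \ (a \ b) = b := by simpa using hb
    rw [this, mul_comm]

lemma half (f g : Finset Ω → ℂ) (hf : f ∅ ≠ 0) (a : Finset Ω) (x : Ω) (hx : x ∈ a) :
    ∑ e ∈ (a.erase x).powerset, MMap.logStar f (a \ e) * MMap.conv f g e
      = ∑ d ∈ (a.erase x).powerset, f (a \ d) * g d := by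
  have h1 : ∀ e ∈ (a.erase x).powerset, MMap.logStar f (a \ e) * MMap.conv f g e
      = ∑ c ∈ e.powerset, (fun c d => MMap.logStar f (a \ (c ∪ d)) * f c * g d) c (e \ c) := by
    intro e _
    unfold MMap.conv
    rw [Finset.mul_sum]
    refine Finset.sum_congr rfl fun c hc => ?_
    simp only
    rw [Finset.union_sdiff_of_subset (Finset.mem_powerset.1 hc)]
    ring
  rw [Finset.sum_congr rfl h1]
  refine (sum_reindex (a.erase x)
    (fun c d => MMap.logStar f (a \ (c ∪ d)) * f c * g d)).trans ?_
  refine Finset.sum_congr rfl fun d hd => ?_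
  simp only [Finset.mem_powerset, Finset.subset_erase] at hd
  rw [← logStar_rec f hf (a \ d) x (Finset.mem_sdiff.2 ⟨hx, hd.2⟩), Finset.sum_mul]
  have : a.erase x \ d = (a \ d).erase x := by grind
  rw [this]
  refine Finset.sum_congr rfl fun c _ => ?_
  have : a \ (c ∪ d) = (a \ d) \ c := by grind
  rw [this]

lemma conv_split (f g : Finset Ω → ℂ) (a : Finset Ω) (x : Ω) (hx : x ∈ a) :
    MMap.conv f g a = ∑ d ∈ (a.erase x).powerset, f (a \ d) * g d
      + ∑ d ∈ (a.erase x).powerset, g (a \ d) * f d := by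
  unfold MMap.conv
  rw [← Finset.sum_filter_add_sum_filter_not a.powerset (fun b => x ∈ b)]
  congr 1
  · refine Finset.sum_bij' (fun b _ => a \ b) (fun b _ => a \ b) ?_ ?_ ?_ ?_ ?_
    · intro b hb
      simp only [Finset.mem_filter, Finset.mem_powerset] at hb ⊢
      grind
    · intro b hb
      simp only [Finset.mem_filter, Finset.mem_powerset] at hb ⊢
      grind
    · intro b hb
      simp only [Finset.mem_filter, Finset.mem_powerset] at hb ⊢
      grind
    · intro b hb
      simp only [Finset.mem_powerset] at hb ⊢
      grind
    · intro b hb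
      simp only [Finset.mem_filter, Finset.mem_powerset] at hb ⊢
      have : a \ (a \ b) = b := by simpa using hb.1
      rw [this]
  · refine Finset.sum_congr ?_ fun d _ => mul_comm _ _
    ext b
    simp only [Finset.mem_filter, Finset.mem_powerset, Finset.subset_erase]

end MMapAux

/-- For M-maps `f`, `g` with `f(∅) ≠ 0` and `g(∅) ≠ 0`, the cumulant of the
convolution product is additive on every nonempty subset `a ⊆ Ω`:
`log*(f * g)(a) = log* f(a) + log* g(a)`. -/
theorem logStar_conv {Ω : Type*} [DecidableEq Ω] [Fintype Ω]
    (f g : Finset Ω → ℂ) (hf : f ∅ ≠ 0) (hg : g ∅ ≠ 0)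
    (a : Finset Ω) (ha : a.Nonempty) :
    MMap.logStar (MMap.conv f g) a = MMap.logStar f a + MMap.logStar g a := by
  obtain ⟨x, hx⟩ := ha
  have h0 : MMap.conv f g ∅ ≠ 0 := by simp [MMap.conv, hf, hg]
  refine MMapAux.uniq (MMap.conv f g) (MMap.logStar (MMap.conv f g))
    (fun a => MMap.logStar f a + MMap.logStar g a) h0 x
    (fun a hx => MMapAux.logStar_rec _ h0 a x hx) ?_ a hx
  intro a hx
  simp only [add_mul, Finset.sum_add_distrib]
  rw [MMapAux.half f g hf a x hx, MMapAux.conv_comm f g, MMapAux.half g f hg a x hx,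
    MMapAux.conv_comm g f, MMapAux.conv_split f g a x hx]
end

section
/- Let f be an M-map with f(∅) ≠ 0, and extend log* f to the empty set by log* f(∅) = Log f(∅), the principal complex logarithm. Then the anticumulant of the cumulant recovers f: exp*(log* f)(a) = f(a) for every subset a ⊆ Ω (including a = ∅). -/
open Finset

/-- The cumulant extended to the empty set by the principal complex logarithm:
`log* f(∅) = Log f(∅)`. -/
noncomputable def MMap.logStarFull {Ω : Type*} [DecidableEq Ω] (f : Finset Ω → ℂ) :
    Finset Ω → ℂ := fun a =>
  if a = ∅ then Complex.log (f ∅) else MMap.logStar f a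

/-- The anticumulant `exp* g`: `exp* g(∅) = e^{g(∅)}` and, for nonempty `a`,
`exp* g(a) = e^{g(∅)} · ∑_p ∏_{c ∈ p} g(c)`, summed over set partitions `p` of `a`. -/
noncomputable def MMap.expStar {Ω : Type*} [DecidableEq Ω] (g : Finset Ω → ℂ) :
    Finset Ω → ℂ := fun a =>
  if a = ∅ then Complex.exp (g ∅)
  else Complex.exp (g ∅) * ∑ p : Finpartition a, ∏ c ∈ p.parts, g c

lemma MMap.marked {Ω : Type*} [DecidableEq Ω] (s : Finset Ω)
    (F : Finset Ω → Finset (Finset Ω) → ℂ) :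
    ∑ b ∈ s.powerset.erase ∅, ∑ q : Finpartition (s \ b), F b q.parts
      = ∑ p : Finpartition s, ∑ b ∈ p.parts, F b (p.parts.erase b) := by
  rw [Finset.sum_sigma', Finset.sum_sigma']
  have key : ∀ x : (Σ b : Finset Ω, Finpartition (s \ b)), x.1 ∉ x.2.parts ∨ x.1 = ∅ := by
    rintro ⟨b, q⟩
    by_contra! h
    have h1 := q.subset h.1
    obtain ⟨y, hy⟩ := h.2
    have := h1 hy
    simp at this
    exact this.2 hy
  refine Finset.sum_bij (fun x hx => ⟨x.2.extend (b := x.1) (c := s)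
    (by simp at hx; simpa using hx.1) disjoint_sdiff_self_left
    (by simp at hx; simpa using hx.2), x.1⟩) ?_ ?_ ?_ ?_
  · rintro ⟨b, q⟩ hx
    simp
  · rintro ⟨b, q⟩ hx ⟨b', q'⟩ hx' h
    rw [Sigma.mk.injEq] at h
    obtain ⟨h1, h2⟩ := h
    obtain rfl : b = b' := eq_of_heq h2
    have h3 := congrArg Finpartition.parts h1
    simp at h3 hx
    have k1 := (key ⟨b, q⟩).resolve_right hx.1
    have k2 := (key ⟨b, q'⟩).resolve_right hx.1
    have h4 := congrArg (fun t => Finset.erase t b) h3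
    simp only [Finset.erase_insert k1, Finset.erase_insert k2] at h4
    rw [Finpartition.ext h4]
  · rintro ⟨p, b⟩ hx
    simp at hx
    have hd : (p.parts.erase b).sup id = s \ b := by
      ext y
      simp only [Finset.mem_sup, Finset.mem_erase, Finset.mem_sdiff, id]
      constructor
      · rintro ⟨t, ⟨ht, htp⟩, hy⟩
        exact ⟨p.subset htp hy, fun hyb => ht (p.eq_of_mem_parts htp hx hy hyb)⟩
      · rintro ⟨hy, hyb⟩
        obtain ⟨t, ht, hyt⟩ := p.exists_mem hy
        exact ⟨t, ⟨fun h => hyb (h ▸ hyt), ht⟩, hyt⟩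
    refine ⟨⟨b, p.ofSubset (Finset.erase_subset b p.parts) hd⟩, ?_, ?_⟩
    · simp [p.ne_empty hx, p.subset hx]
    · rw [Sigma.mk.injEq]
      refine ⟨?_, HEq.rfl⟩
      ext1
      simp [Finpartition.ofSubset, Finset.insert_erase hx]
  · rintro ⟨b, q⟩ hx
    simp at hx
    have k1 := (key ⟨b, q⟩).resolve_right hx.1
    simp [Finset.erase_insert k1]

/-- weighted partition sums -/
noncomputable def MMap.psum {Ω : Type*} [DecidableEq Ω] (w : ℕ → ℂ) (h : Finset Ω → ℂ)
    (s : Finset Ω) : ℂ := ∑ p : Finpartition s, w p.parts.card * ∏ c ∈ p.parts, h c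

lemma MMap.psum_empty {Ω : Type*} [DecidableEq Ω] (w : ℕ → ℂ) (h : Finset Ω → ℂ) :
    MMap.psum w h ∅ = w 0 := by
  unfold MMap.psum
  have : ∀ p : Finpartition (∅ : Finset Ω), p.parts = ∅ := fun p =>
    p.parts_eq_empty_iff.2 rfl
  simp only [this, Finset.card_empty, Finset.prod_empty, mul_one, Finset.sum_const]
  have hc : (Finset.univ : Finset (Finpartition (∅ : Finset Ω))).card = 1 :=
    Finset.card_eq_one.2 ⟨Finpartition.empty _, by
      ext p; simp; ext1; rw [this]; rfl⟩
  rw [hc, one_smul]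

lemma MMap.psum_rec {Ω : Type*} [DecidableEq Ω] (w : ℕ → ℂ) (h : Finset Ω → ℂ)
    (s : Finset Ω) (x : Ω) (hx : x ∈ s) :
    MMap.psum w h s = ∑ b ∈ s.powerset with x ∈ b,
      h b * MMap.psum (fun k => w (k+1)) h (s \ b) := by
  have := MMap.marked s (fun b Q => if x ∈ b then w (Q.card + 1) * (h b * ∏ c ∈ Q, h c) else 0)
  have e : s.powerset.filter (fun b => x ∈ b) = (s.powerset.erase ∅).filter (fun b => x ∈ b) := by
    ext b
    simp only [Finset.mem_filter, Finset.mem_erase]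
    constructor
    · rintro ⟨h1, h2⟩
      exact ⟨⟨Finset.ne_empty_of_mem h2, h1⟩, h2⟩
    · rintro ⟨h1, h2⟩
      exact ⟨h1.2, h2⟩
  rw [e, Finset.sum_filter]
  trans (∑ p : Finpartition s, ∑ b ∈ p.parts,
    if x ∈ b then w ((p.parts.erase b).card + 1) * (h b * ∏ c ∈ p.parts.erase b, h c) else 0)
  · unfold MMap.psum
    refine Finset.sum_congr rfl fun p _ => ?_
    rw [Finset.sum_eq_single_of_mem (p.part x) (p.part_mem.2 hx)]
    · rw [if_pos (p.mem_part_self.2 hx), Finset.card_erase_add_one (p.part_mem.2 hx),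
        Finset.mul_prod_erase _ _ (p.part_mem.2 hx)]
    · intro b hb hne
      rw [if_neg]
      intro hxb
      exact hne (p.part_eq_of_mem hb hxb).symm
  · rw [← this]
    refine Finset.sum_congr rfl fun b _ => ?_
    split_ifs
    · unfold MMap.psum
      rw [Finset.mul_sum]
      exact Finset.sum_congr rfl fun q _ => by ring
    · simp

lemma MMap.psum_inv {Ω : Type*} [DecidableEq Ω] (h : Finset Ω → ℂ) (h0 : h ∅ = 1)
    (s : Finset Ω) :
    ∑ b ∈ s.powerset, h b * MMap.psum (fun k => (k.factorial : ℂ) * (-1) ^ k) h (s \ b)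
      = if s = ∅ then 1 else 0 := by
  split_ifs with hs
  · subst hs
    simp [MMap.psum_empty, h0]
  rw [← Finset.add_sum_erase _ _ (Finset.empty_mem_powerset s)]
  have := MMap.marked s (fun b Q => ((Q.card.factorial : ℂ) * (-1) ^ Q.card) *
    (h b * ∏ c ∈ Q, h c))
  have e : ∑ b ∈ s.powerset.erase ∅, h b * MMap.psum (fun k => (k.factorial : ℂ) * (-1) ^ k) h (s \ b)
    = ∑ b ∈ s.powerset.erase ∅, ∑ q : Finpartition (s \ b), ((q.parts.card.factorial : ℂ) * (-1) ^ q.parts.card) *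
    (h b * ∏ c ∈ q.parts, h c) := by
    refine Finset.sum_congr rfl fun b _ => ?_
    unfold MMap.psum
    rw [Finset.mul_sum]
    exact Finset.sum_congr rfl fun q _ => by ring
  rw [e, this, h0, one_mul, Finset.sdiff_empty, MMap.psum, ← Finset.sum_add_distrib]
  refine Finset.sum_eq_zero fun p _ => ?_
  have hp : p.parts.card ≠ 0 := by
    rw [Finset.card_ne_zero]
    exact p.parts_nonempty hs
  have e2 : ∀ b ∈ p.parts, (((p.parts.erase b).card.factorial : ℂ) * (-1) ^ (p.parts.erase b).card) *
    (h b * ∏ c ∈ p.parts.erase b, h c) = (((p.parts.card - 1).factorial : ℂ) * (-1) ^ (p.parts.card - 1)) *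
      ∏ c ∈ p.parts, h c := by
    intro b hb
    rw [Finset.mul_prod_erase _ _ hb, Finset.card_erase_of_mem hb]
  rw [Finset.sum_congr rfl e2, Finset.sum_const, nsmul_eq_mul]
  obtain ⟨k, hk⟩ := Nat.exists_eq_succ_of_ne_zero hp
  rw [hk]
  simp only [Nat.succ_eq_add_one, Nat.add_sub_cancel, Nat.factorial_succ]
  push_cast
  ring

lemma MMap.exp_log_aux {Ω : Type*} [DecidableEq Ω] (h g : Finset Ω → ℂ) (h0 : h ∅ = 1)
    (hg : ∀ a, a ≠ ∅ → g a = MMap.psum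
      (fun k => ((k-1).factorial : ℂ) * (-1) ^ (k-1)) h a) (a : Finset Ω) :
    MMap.psum (fun _ => 1) g a = h a := by
  induction a using Finset.strongInduction with
  | H a ih =>
  rcases Finset.eq_empty_or_nonempty a with rfl | ⟨x, hx⟩
  · rw [MMap.psum_empty, h0]
  rw [MMap.psum_rec _ _ a x hx]
  set U := MMap.psum (fun k => (k.factorial : ℂ) * (-1) ^ k) h with hU
  have e1 : ∀ b ∈ a.powerset.filter (fun b => x ∈ b),
      g b * MMap.psum (fun _ => 1) g (a \ b) =
      ∑ d ∈ b.powerset with x ∈ d, h d * U (b \ d) * h (a \ b) := by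
    intro b hb
    simp only [Finset.mem_filter, Finset.mem_powerset] at hb
    rw [ih (a \ b) (Finset.sdiff_ssubset hb.1 ⟨x, hb.2⟩), hg b (Finset.ne_empty_of_mem hb.2),
      MMap.psum_rec _ _ b x hb.2, Finset.sum_mul]
    rfl
  rw [Finset.sum_congr rfl e1]
  rw [Finset.sum_comm' (t' := a.powerset.filter (fun d => x ∈ d))
    (s' := fun d => a.powerset.filter (fun b => d ⊆ b))]
  · have e2 : ∀ d ∈ a.powerset.filter (fun d => x ∈ d),
        ∑ b ∈ a.powerset with d ⊆ b, h d * U (b \ d) * h (a \ b)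
        = h d * if a \ d = ∅ then 1 else 0 := by
      intro d hd
      simp only [Finset.mem_filter, Finset.mem_powerset] at hd
      rw [← MMap.psum_inv h h0 (a \ d), Finset.mul_sum]
      refine Finset.sum_bij' (fun b _ => a \ b) (fun e _ => a \ e) ?_ ?_ ?_ ?_ ?_
      · intro b hb
        simp only [Finset.mem_filter, Finset.mem_powerset] at hb ⊢
        exact Finset.sdiff_subset_sdiff subset_rfl hb.2
      · intro e he
        simp only [Finset.mem_filter, Finset.mem_powerset] at he ⊢
        refine ⟨Finset.sdiff_subset, fun y hy => ?_⟩
        have := @he y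
        have := hd.1 hy
        grind
      · intro b hb
        simp only [Finset.mem_filter, Finset.mem_powerset] at hb
        exact Finset.sdiff_sdiff_eq_self hb.1
      · intro e he
        simp only [Finset.mem_powerset] at he
        exact Finset.sdiff_sdiff_eq_self (he.trans Finset.sdiff_subset)
      · intro b hb
        simp only [Finset.mem_filter, Finset.mem_powerset] at hb
        have : (a \ d) \ (a \ b) = b \ d := by
          ext y
          have := @hb.1 y
          grind
        rw [this, ← hU]
        ring
    rw [Finset.sum_congr rfl e2, Finset.sum_eq_single_of_mem a]
    · simp
    · simp [hx]
    · intro d hd hne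
      simp only [Finset.mem_filter, Finset.mem_powerset] at hd
      rw [if_neg, mul_zero]
      rw [Finset.sdiff_eq_empty_iff_subset]
      exact fun h => hne (hd.1.antisymm h)
  · intro b d
    simp only [Finset.mem_filter, Finset.mem_powerset]
    constructor
    · rintro ⟨⟨h1, h2⟩, h3, h4⟩
      exact ⟨⟨h1, h3⟩, h3.trans h1, h4⟩
    · rintro ⟨⟨h1, h2⟩, h3, h4⟩
      exact ⟨⟨h1, h2 h4⟩, h2, h4⟩

/-- For an M-map `f` with `f(∅) ≠ 0`, the anticumulant of the cumulant recovers `f`: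
`exp*(log* f)(a) = f(a)` for every subset `a ⊆ Ω`, including `a = ∅`. -/
theorem expStar_logStar {Ω : Type*} [DecidableEq Ω] [Fintype Ω]
    (f : Finset Ω → ℂ) (hf : f ∅ ≠ 0) (a : Finset Ω) :
    MMap.expStar (MMap.logStarFull f) a = f a := by
  have key := MMap.exp_log_aux (fun s => f s / f ∅) (MMap.logStarFull f) (div_self hf) (by
    intro a ha
    simp only [MMap.logStarFull, if_neg ha, MMap.logStar, MMap.psum]
    refine Finset.sum_congr rfl fun p _ => ?_
    rw [Finset.prod_div_distrib, Finset.prod_const, mul_div_assoc]) a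
  have h0 : Complex.exp (MMap.logStarFull f ∅) = f ∅ := by
    simp [MMap.logStarFull, Complex.exp_log hf]
  unfold MMap.expStar
  split_ifs with ha
  · rw [h0, ha]
  · simp only [MMap.psum, one_mul] at key
    rw [h0, key, mul_div_cancel₀ _ hf]
end

section
/- Let g be any M-map. Then for every nonempty subset a ⊆ Ω, the cumulant of the anticumulant recovers g: log*(exp* g)(a) = g(a). -/
open Finset

namespace MAux

variable {Ω : Type*} [DecidableEq Ω]

theorem sum_blocks (a : Finset Ω) (G : Finset Ω → Finset (Finset Ω) → ℂ) :
    ∑ p : Finpartition a, ∑ b ∈ p.parts, G b (p.parts.erase b) =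
      ∑ b ∈ a.powerset with b ≠ ∅, ∑ q : Finpartition (a \ b), G b q.parts := by
  rw [Finset.sum_sigma', Finset.sum_sigma']
  have key : ∀ (p : Finpartition a) (b : Finset Ω), b ∈ p.parts →
      (p.parts.erase b).sup id = a \ b := by
    intro p b hb
    ext y
    simp only [Finset.mem_sup, Finset.mem_erase, id, Finset.mem_sdiff]
    constructor
    · rintro ⟨c, ⟨hcb, hc⟩, hy⟩
      refine ⟨p.subset hc hy, fun hyb => hcb (p.eq_of_mem_parts hc hb hy hyb)⟩
    · rintro ⟨hya, hyb⟩
      obtain ⟨c, hc, hy⟩ := p.exists_mem hya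
      exact ⟨c, ⟨fun h => hyb (h ▸ hy), hc⟩, hy⟩
  refine Finset.sum_bij (fun s hs => ⟨s.2, s.1.ofSubset (Finset.erase_subset s.2 s.1.parts)
    (key s.1 s.2 (Finset.mem_sigma.1 hs).2)⟩) ?_ ?_ ?_ ?_
  · rintro ⟨p, b⟩ hs
    have hb : b ∈ p.parts := (Finset.mem_sigma.1 hs).2
    simp only [Finset.mem_sigma, Finset.mem_filter, Finset.mem_powerset, Finset.mem_univ, and_true]
    exact ⟨p.subset hb, p.ne_empty hb⟩
  · rintro ⟨p, b⟩ hs ⟨p', b'⟩ hs' h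
    have hb : b ∈ p.parts := (Finset.mem_sigma.1 hs).2
    have hb' : b' ∈ p'.parts := (Finset.mem_sigma.1 hs').2
    have h1 : b = b' := congrArg (fun t : (b : Finset Ω) × Finpartition (a \ b) => t.1) h
    have h2 : p.parts.erase b = p'.parts.erase b' :=
      congrArg (fun t : (b : Finset Ω) × Finpartition (a \ b) => t.2.parts) h
    subst h1
    have h3 : p = p' := by
      apply Finpartition.ext
      rw [← Finset.insert_erase hb, ← Finset.insert_erase hb', h2]
    subst h3
    rfl
  · rintro ⟨b, q⟩ hs
    simp only [Finset.mem_sigma, Finset.mem_filter, Finset.mem_powerset, Finset.mem_univ,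
      and_true] at hs
    obtain ⟨hba, hb⟩ := hs
    have hn : b ∉ q.parts := by
      intro h
      obtain ⟨y, hy⟩ := Finset.nonempty_iff_ne_empty.2 hb
      exact (Finset.mem_sdiff.1 (q.subset h hy)).2 hy
    refine ⟨⟨q.extend (b := b) (c := a) hb Finset.sdiff_disjoint
      (Finset.sdiff_union_of_subset hba), b⟩, ?_, ?_⟩
    · simp
    · congr 1
      apply Finpartition.ext
      exact Finset.erase_insert hn
  · rintro ⟨p, b⟩ hs
    rfl

/-- weighted partition sum -/
noncomputable def S (w : ℕ → ℂ) (f : Finset Ω → ℂ) (a : Finset Ω) : ℂ :=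
  ∑ p : Finpartition a, w p.parts.card * ∏ c ∈ p.parts, f c

theorem S_empty (w : ℕ → ℂ) (f : Finset Ω → ℂ) : S w f ∅ = w 0 := by
  have h : ∀ p : Finpartition (∅ : Finset Ω), p.parts = ∅ := fun p =>
    p.parts_eq_empty_iff.2 rfl
  unfold S
  simp only [h]
  have : Fintype.card (Finpartition (∅ : Finset Ω)) = 1 := by
    rw [Fintype.card_eq_one_iff]
    exact ⟨Finpartition.empty _, fun p => Finpartition.ext (by rw [h, h])⟩
  simp [this]

theorem S_rec (w : ℕ → ℂ) (f : Finset Ω → ℂ) (a : Finset Ω) (x : Ω) (hx : x ∈ a) :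
    S w f a = ∑ b ∈ a.powerset with x ∈ b, f b * S (fun n => w (n + 1)) f (a \ b) := by
  have h := sum_blocks a (fun b q => if x ∈ b then w (q.card + 1) * (f b * ∏ c ∈ q, f c) else 0)
  have h1 : S w f a = ∑ p : Finpartition a, ∑ b ∈ p.parts,
      if x ∈ b then w ((p.parts.erase b).card + 1) * (f b * ∏ c ∈ p.parts.erase b, f c) else 0 := by
    unfold S
    refine Finset.sum_congr rfl fun p _ => ?_
    rw [Finset.sum_eq_single_of_mem (p.part x) (p.part_mem.2 hx)]
    · rw [if_pos (p.mem_part_self.2 hx), Finset.card_erase_add_one (p.part_mem.2 hx),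
        Finset.mul_prod_erase _ _ (p.part_mem.2 hx)]
    · intro b hb hne
      rw [if_neg]
      intro hxb
      exact hne (p.part_eq_of_mem hb hxb).symm
  rw [h1, h, Finset.sum_filter, Finset.sum_filter]
  refine Finset.sum_congr rfl fun b _ => ?_
  by_cases hxb : x ∈ b
  · have : b ≠ ∅ := Finset.ne_empty_of_mem hxb
    simp only [this, hxb, if_true, ne_eq, not_false_eq_true, S, Finset.mul_sum]
    refine Finset.sum_congr rfl fun q _ => ?_
    ring
  · simp [hxb]

/-- weights of the inverse -/
noncomputable def v (n : ℕ) : ℂ := (Nat.factorial n : ℂ) * (-1) ^ n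

/-- weights of the logarithm -/
noncomputable def lw (n : ℕ) : ℂ := (Nat.factorial (n - 1) : ℂ) * (-1) ^ (n - 1)

theorem S_inv (f : Finset Ω → ℂ) (hf : f ∅ = 1) (e : Finset Ω) (he : e ≠ ∅) :
    ∑ b ∈ e.powerset, f b * S v f (e \ b) = 0 := by
  rw [← Finset.sum_filter_add_sum_filter_not e.powerset (fun b => b ≠ ∅)]
  have h2 : ∑ b ∈ e.powerset with ¬ (b ≠ ∅), f b * S v f (e \ b) = S v f e := by
    rw [Finset.sum_eq_single_of_mem ∅ (by simp)]
    · simp [hf]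
    · intro b hb hb'
      simp at hb
      exact absurd hb.2 hb'
  have h := sum_blocks e (fun b q => v q.card * (f b * ∏ c ∈ q, f c))
  have h1 : ∑ b ∈ e.powerset with b ≠ ∅, f b * S v f (e \ b) =
      ∑ b ∈ e.powerset with b ≠ ∅, ∑ q : Finpartition (e \ b),
        v q.parts.card * (f b * ∏ c ∈ q.parts, f c) := by
    refine Finset.sum_congr rfl fun b _ => ?_
    rw [S, Finset.mul_sum]
    refine Finset.sum_congr rfl fun q _ => ?_
    ring
  rw [h2, h1, ← h, S, ← Finset.sum_add_distrib]
  refine Finset.sum_eq_zero fun p _ => ?_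
  have h3 : ∀ b ∈ p.parts, v (p.parts.erase b).card * (f b * ∏ c ∈ p.parts.erase b, f c) =
      v (p.parts.card - 1) * ∏ c ∈ p.parts, f c := by
    intro b hb
    rw [Finset.card_erase_of_mem hb, Finset.mul_prod_erase _ _ hb]
  rw [Finset.sum_congr rfl h3, Finset.sum_const]
  obtain ⟨n, hn⟩ : ∃ n, p.parts.card = n + 1 :=
    Nat.exists_eq_succ_of_ne_zero (Finset.card_ne_zero.2 (p.parts_nonempty he))
  rw [hn]
  simp only [v, Nat.add_sub_cancel, Nat.factorial_succ, nsmul_eq_mul, pow_succ]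
  push_cast
  ring

theorem S_log (f : Finset Ω → ℂ) (hf : f ∅ = 1) (a : Finset Ω) (x : Ω) (hx : x ∈ a) :
    ∑ b ∈ a.powerset with x ∈ b, S lw f b * f (a \ b) = f a := by
  have h1 : ∑ b ∈ a.powerset with x ∈ b, S lw f b * f (a \ b) =
      ∑ b ∈ a.powerset with x ∈ b, ∑ c ∈ b.powerset with x ∈ c,
        f c * S v f (b \ c) * f (a \ b) := by
    refine Finset.sum_congr rfl fun b hb => ?_
    rw [S_rec lw f b x (Finset.mem_filter.1 hb).2, Finset.sum_mul]
    rfl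
  have h2 : ∑ b ∈ a.powerset with x ∈ b, ∑ c ∈ b.powerset with x ∈ c,
        f c * S v f (b \ c) * f (a \ b) =
      ∑ c ∈ a.powerset with x ∈ c, ∑ d ∈ (a \ c).powerset,
        f c * (f d * S v f ((a \ c) \ d)) := by
    rw [Finset.sum_sigma', Finset.sum_sigma']
    refine Finset.sum_bij' (fun s _ => ⟨s.2, a \ s.1⟩) (fun s _ => ⟨a \ s.2, s.1⟩) ?_ ?_ ?_ ?_ ?_
    · rintro ⟨b, c⟩ h
      simp only [Finset.mem_sigma, Finset.mem_filter, Finset.mem_powerset] at h ⊢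
      exact ⟨⟨h.2.1.trans h.1.1, h.2.2⟩, Finset.sdiff_subset_sdiff subset_rfl h.2.1⟩
    · rintro ⟨c, d⟩ h
      simp only [Finset.mem_sigma, Finset.mem_filter, Finset.mem_powerset] at h ⊢
      grind
    · rintro ⟨b, c⟩ h
      simp only [Finset.mem_sigma, Finset.mem_filter, Finset.mem_powerset] at h
      simp [Finset.inter_eq_right.2 h.1.1]
    · rintro ⟨c, d⟩ h
      simp only [Finset.mem_sigma, Finset.mem_filter, Finset.mem_powerset] at h
      simp [Finset.inter_eq_right.2 (h.2.trans Finset.sdiff_subset)]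
    · rintro ⟨b, c⟩ h
      simp only [Finset.mem_sigma, Finset.mem_filter, Finset.mem_powerset] at h
      have : (a \ c) \ (a \ b) = b \ c := by grind
      simp only [this]
      ring
  rw [h1, h2, Finset.sum_eq_single_of_mem a (by simp [hx])]
  · simp [S_empty, hf, v]
  · intro c hc hne
    rw [← Finset.mul_sum, S_inv f hf, mul_zero]
    intro h
    exact hne (Finset.Subset.antisymm (Finset.mem_powerset.1 (Finset.mem_filter.1 hc).1)
      (Finset.sdiff_eq_empty_iff_subset.1 h))

theorem S_main (g : Finset Ω → ℂ) (a : Finset Ω) :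
    a.Nonempty → S lw (S (fun _ => 1) g) a = g a := by
  induction a using Finset.strongInduction with
  | H a ih =>
    rintro ⟨x, hx⟩
    have hF : S (fun _ => 1) g ∅ = 1 := S_empty _ _
    have h1 := S_log (S (fun _ => 1) g) hF a x hx
    have h2 := S_rec (fun _ => 1) g a x hx
    rw [h2] at h1
    have ha : a ∈ a.powerset.filter (fun b => x ∈ b) := by simp [hx]
    rw [← Finset.add_sum_erase _ _ ha, ← Finset.add_sum_erase _ _ ha] at h1
    have h3 : ∑ b ∈ (a.powerset.filter (fun b => x ∈ b)).erase a,
        S lw (S (fun _ => 1) g) b * S (fun _ => 1) g (a \ b) =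
        ∑ b ∈ (a.powerset.filter (fun b => x ∈ b)).erase a,
        g b * S (fun _ => 1) g (a \ b) := by
      refine Finset.sum_congr rfl fun b hb => ?_
      simp only [Finset.mem_erase, Finset.mem_filter, Finset.mem_powerset] at hb
      rw [ih b (lt_of_le_of_ne hb.2.1 hb.1) ⟨x, hb.2.2⟩]
    rw [h3] at h1
    simpa [S_empty] using h1

end MAux

/-- For any M-map `g`, the cumulant of the anticumulant recovers `g`:
`log*(exp* g)(a) = g(a)` for every nonempty subset `a ⊆ Ω`. -/
theorem logStar_expStar {Ω : Type*} [DecidableEq Ω] [Fintype Ω]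
    (g : Finset Ω → ℂ) (a : Finset Ω) (ha : a.Nonempty) :
    MMap.logStar (MMap.expStar g) a = g a := by
  rw [← MAux.S_main g a ha]
  unfold MMap.logStar MAux.S MAux.lw
  refine Finset.sum_congr rfl fun p _ => ?_
  have h0 : MMap.expStar g ∅ = Complex.exp (g ∅) := by simp [MMap.expStar]
  have h1 : ∀ c ∈ p.parts, MMap.expStar g c =
      Complex.exp (g ∅) * ∑ q : Finpartition c, 1 * ∏ d ∈ q.parts, g d := by
    intro c hc
    simp [MMap.expStar, p.ne_empty hc]
  rw [Finset.prod_congr rfl h1, Finset.prod_mul_distrib, Finset.prod_const, h0]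
  have := pow_ne_zero p.parts.card (Complex.exp_ne_zero (g ∅))
  field_simp
end

section
/- Let {A, B} be a bipartition of the finite set Ω (A ∩ B = ∅, A ∪ B = Ω), and let f be an M-map that factorizes with respect to {A, B} and satisfies f(∅) ≠ 0 (whence f(∅) = 1). Define M-maps f_A and f_B by f_A(c) = f(c) if c ⊆ A and f_A(c) = 0 otherwise, and f_B(c) = f(c) if c ⊆ B and f_B(c) = 0 otherwise. Then f = f_A * f_B. -/
open Finset

/-- `f` factorizes with respect to the bipartition `{A, B}` of `Ω` if
`f(c) = f(c ∩ A)·f(c ∩ B)` for every subset `c ⊆ Ω`. -/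
def MMap.Factorizes {Ω : Type*} [DecidableEq Ω] (f : Finset Ω → ℂ) (A B : Finset Ω) : Prop :=
  ∀ c : Finset Ω, f c = f (c ∩ A) * f (c ∩ B)

/-- If `{A, B}` is a bipartition of `Ω` and the M-map `f` factorizes with respect to
`{A, B}` with `f(∅) ≠ 0`, then `f = f_A * f_B`, where `f_A` agrees with `f` on
subsets of `A` and vanishes elsewhere, and similarly for `f_B`. -/
theorem factorizes_eq_conv {Ω : Type*} [DecidableEq Ω] [Fintype Ω]
    (A B : Finset Ω) (hAB : A ∩ B = ∅) (hUnion : A ∪ B = Finset.univ)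
    (f : Finset Ω → ℂ) (hfact : MMap.Factorizes f A B) (hf : f ∅ ≠ 0) :
    f = MMap.conv (fun c => if c ⊆ A then f c else 0) (fun c => if c ⊆ B then f c else 0) := by
  funext c
  have hd : ∀ x, x ∈ A → x ∈ B → False := fun x h1 h2 => by
    have : x ∈ A ∩ B := Finset.mem_inter.2 ⟨h1, h2⟩
    simp [hAB] at this
  have hu : ∀ x, x ∈ A ∨ x ∈ B := fun x => by
    rw [← Finset.mem_union, hUnion]
    exact Finset.mem_univ x
  have hc : c \ (c ∩ A) = c ∩ B := by
    ext x
    have h1 := hd x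
    have h2 := hu x
    simp only [Finset.mem_sdiff, Finset.mem_inter]
    tauto
  unfold MMap.conv
  rw [Finset.sum_eq_single (c ∩ A)]
  · simp only [hc, Finset.inter_subset_right, if_true]
    exact hfact c
  · intro b hb hne
    rw [Finset.mem_powerset] at hb
    by_cases h1 : b ⊆ A
    · by_cases h2 : c \ b ⊆ B
      · exfalso
        apply hne
        ext x
        rw [Finset.mem_inter]
        constructor
        · intro hx
          exact ⟨hb hx, h1 hx⟩
        · rintro ⟨hx, hxA⟩
          by_contra hxb
          exact hd x hxA (h2 (Finset.mem_sdiff.2 ⟨hx, hxb⟩))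
      · simp [h2]
    · simp [h1]
  · intro h
    exact absurd (Finset.mem_powerset.2 Finset.inter_subset_left) h
end

section
/- Let {A, B} be a bipartition of the finite set Ω, and let f be an M-map that factorizes with respect to {A, B} and satisfies f(∅) ≠ 0. Then the cumulant of f vanishes on every nonempty subset that meets both parts: log* f(c) = 0 for every nonempty c ⊆ Ω with c ⊄ A and c ⊄ B. -/
open Finset

theorem MMap.aux_sum {Ω : Type*} [DecidableEq Ω] (F : Finset (Finset Ω) → ℂ)
    (c d : Finset Ω) (hd : d.Nonempty) (hdc : d ⊆ c) :
    ∑ q : Finpartition c with d ∈ q.parts, F q.parts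
      = ∑ p : Finpartition (c \ d), F (insert d p.parts) := by
  symm
  have hd' : d ≠ ⊥ := hd.ne_empty
  have hdis : Disjoint (c \ d) d := Finset.sdiff_disjoint
  have hsup : (c \ d) ⊔ d = c := Finset.sdiff_union_of_subset hdc
  have hnot : ∀ p : Finpartition (c \ d), d ∉ p.parts := by
    intro p hp
    have h1 : d ⊆ c \ d := p.le hp
    obtain ⟨y, hy⟩ := hd
    have := h1 hy
    simp [hy] at this
  refine Finset.sum_bij (fun p _ => p.extend hd' hdis hsup) ?_ ?_ ?_ ?_
  · intro p _
    simp
  · intro p _ q _ h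
    have h2 := congrArg Finpartition.parts h
    simp only [Finpartition.extend_parts] at h2
    ext1
    rw [← Finset.erase_insert (hnot p), h2, Finset.erase_insert (hnot q)]
  · intro q hq
    have hq' : d ∈ q.parts := by simpa using hq
    have hs : (q.parts.erase d).sup id = c \ d := by
      ext y
      simp only [Finset.mem_sup, Finset.mem_erase, id, Finset.mem_sdiff]
      constructor
      · rintro ⟨e, ⟨hne, he⟩, hy⟩
        refine ⟨q.le he hy, fun hyd => ?_⟩
        exact Finset.disjoint_left.1 (q.disjoint he hq' hne) hy hyd
      · rintro ⟨hy, hyd⟩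
        obtain ⟨e, he, hye⟩ := q.exists_mem hy
        exact ⟨e, ⟨fun h => hyd (h ▸ hye), he⟩, hye⟩
    refine ⟨q.ofSubset (Finset.erase_subset d _) hs, Finset.mem_univ _, ?_⟩
    ext1
    simp [Finpartition.ofSubset, Finset.insert_erase hq']
  · intro p _
    simp

theorem MMap.aux_rec {Ω : Type*} [DecidableEq Ω] (f : Finset Ω → ℂ) (hf : f ∅ = 1)
    (c : Finset Ω) (x : Ω) (hx : x ∈ c) :
    MMap.logStar f c + ∑ d ∈ (c.erase x).powerset.erase ∅, f d * MMap.logStar f (c \ d) = f c := by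
  have hcne : c ≠ ⊥ := by rintro rfl; simp at hx
  let w : ℕ → ℂ := fun k => (Nat.factorial (k - 1) : ℂ) * (-1 : ℂ) ^ (k - 1)
  have hL : ∀ a, MMap.logStar f a = ∑ p : Finpartition a, w p.parts.card * ∏ b ∈ p.parts, f b := by
    intro a
    simp [MMap.logStar, hf, w]
  have h1 : ∀ d ∈ (c.erase x).powerset.erase ∅, f d * MMap.logStar f (c \ d)
      = ∑ q : Finpartition c with d ∈ q.parts, w (q.parts.card - 1) * ∏ b ∈ q.parts, f b := by
    intro d hd
    simp only [Finset.mem_erase, Finset.mem_powerset] at hd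
    have hdn : d.Nonempty := Finset.nonempty_iff_ne_empty.2 hd.1
    rw [MMap.aux_sum (fun s => w (s.card - 1) * ∏ b ∈ s, f b) c d hdn
      (hd.2.trans (Finset.erase_subset _ _)), hL, Finset.mul_sum]
    refine Finset.sum_congr rfl fun p _ => ?_
    have hnot : d ∉ p.parts := by
      intro hp
      have h1 : d ⊆ c \ d := p.le hp
      obtain ⟨y, hy⟩ := hdn
      have := h1 hy
      simp [hy] at this
    rw [Finset.card_insert_of_notMem hnot, Finset.prod_insert hnot, Nat.add_sub_cancel]
    ring
  rw [Finset.sum_congr rfl h1]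
  simp only [Finset.sum_filter]
  rw [Finset.sum_comm, hL, ← Finset.sum_add_distrib]
  have h2 : ∀ q : Finpartition c,
      (w q.parts.card * ∏ b ∈ q.parts, f b + ∑ d ∈ (c.erase x).powerset.erase ∅,
        if d ∈ q.parts then w (q.parts.card - 1) * ∏ b ∈ q.parts, f b else 0)
      = if q = Finpartition.indiscrete hcne then f c else 0 := by
    intro q
    have hset : ((c.erase x).powerset.erase ∅).filter (fun d => d ∈ q.parts)
        = q.parts.erase (q.part x) := by
      ext d
      simp only [Finset.mem_filter, Finset.mem_erase, Finset.mem_powerset]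
      constructor
      · rintro ⟨⟨_, h⟩, hd⟩
        refine ⟨?_, hd⟩
        rintro rfl
        have := h (q.mem_part hx)
        simp at this
      · rintro ⟨hne, hd⟩
        refine ⟨⟨q.ne_bot hd, fun y hy => ?_⟩, hd⟩
        refine Finset.mem_erase.2 ⟨?_, q.le hd hy⟩
        rintro rfl
        exact hne (q.part_eq_of_mem hd hy).symm
    rw [← Finset.sum_filter, hset, Finset.sum_const,
      Finset.card_erase_of_mem (q.part_mem.2 hx), nsmul_eq_mul]
    have hpos : 0 < q.parts.card := Finset.card_pos.2 (q.parts_nonempty hcne)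
    split_ifs with h
    · subst h
      simp [w]
    · have hk : q.parts.card ≠ 1 := by
        intro hk
        apply h
        obtain ⟨e, he⟩ := Finset.card_eq_one.1 hk
        have hs := q.sup_parts
        rw [he] at hs
        simp at hs
        ext1
        simp [he, hs]
      obtain ⟨k, hk'⟩ : ∃ k, q.parts.card = k + 2 := ⟨q.parts.card - 2, by omega⟩
      rw [hk']
      simp only [w, Nat.add_sub_cancel, show k + 2 - 1 = k + 1 by omega, Nat.factorial_succ, pow_succ]
      push_cast
      ring
  rw [Finset.sum_congr rfl fun q _ => h2 q]
  simp

/-- If the M-map `f` factorizes with respect to a bipartition `{A, B}` of `Ω` and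
`f(∅) ≠ 0`, then its cumulant vanishes on every nonempty subset meeting both
parts: `log* f(c) = 0` whenever `c ⊄ A` and `c ⊄ B`. -/
theorem logStar_factorizes_eq_zero {Ω : Type*} [DecidableEq Ω] [Fintype Ω]
    (A B : Finset Ω) (hAB : A ∩ B = ∅) (hUnion : A ∪ B = Finset.univ)
    (f : Finset Ω → ℂ) (hfact : MMap.Factorizes f A B) (hf : f ∅ ≠ 0)
    (c : Finset Ω) (hc : c.Nonempty) (hcA : ¬ c ⊆ A) (hcB : ¬ c ⊆ B) :
    MMap.logStar f c = 0 := by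
  have hf1 : f ∅ = 1 := by
    have h := hfact ∅
    simp only [Finset.empty_inter] at h
    exact (mul_left_cancel₀ hf (by rw [mul_one]; exact h)).symm
  have hnB : ∀ y, y ∈ A → y ∉ B := fun y h1 h2 => by
    have : y ∈ A ∩ B := Finset.mem_inter.2 ⟨h1, h2⟩
    simp [hAB] at this
  have hor : ∀ y, y ∈ A ∨ y ∈ B := fun y => by
    have : y ∈ A ∪ B := by simp [hUnion]
    simpa using this
  clear hc
  induction c using Finset.strongInduction with
  | H c ih =>
  obtain ⟨x, hx, hxB⟩ := Finset.not_subset.1 hcB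
  obtain ⟨z, hz, hzA⟩ := Finset.not_subset.1 hcA
  have hxA : x ∈ A := (hor x).resolve_right hxB
  have hzB : z ∈ B := (hor z).resolve_left hzA
  have hrec := MMap.aux_rec f hf1 c x hx
  have hxcA : x ∈ c ∩ A := Finset.mem_inter.2 ⟨hx, hxA⟩
  have hrecA := MMap.aux_rec f hf1 (c ∩ A) x hxcA
  have hA2 : ∑ e ∈ ((c ∩ A).erase x).powerset, f e * MMap.logStar f ((c ∩ A) \ e) = f (c ∩ A) := by
    rw [← hrecA, ← Finset.add_sum_erase _ _ (Finset.empty_mem_powerset _)]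
    simp [hf1]
  have hsum : ∑ d ∈ (c.erase x).powerset.erase ∅, f d * MMap.logStar f (c \ d)
      = ∑ e ∈ ((c ∩ A).erase x).powerset, f (c ∩ B) * (f e * MMap.logStar f ((c ∩ A) \ e)) := by
    rw [← Finset.sum_filter_of_ne (p := fun d => c ∩ B ⊆ d)]
    · refine Finset.sum_nbij' (fun d => d ∩ A) (fun e => e ∪ (c ∩ B)) ?_ ?_ ?_ ?_ ?_
      · intro d hd
        simp only [Finset.mem_filter, Finset.mem_erase, Finset.mem_powerset] at hd ⊢
        intro y hy
        have := @hd.1.2 y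
        grind
      · intro e he
        simp only [Finset.mem_filter, Finset.mem_erase, Finset.mem_powerset] at he ⊢
        refine ⟨⟨?_, ?_⟩, Finset.subset_union_right⟩
        · exact Finset.ne_empty_of_mem (a := z) (by simp [hz, hzB])
        · intro y hy
          have := @he y
          grind
      · intro d hd
        simp only [Finset.mem_filter, Finset.mem_erase, Finset.mem_powerset] at hd ⊢
        ext y
        have h1 := @hd.1.2 y
        have h2 := @hd.2 y
        have h3 := hor y
        grind
      · intro e he
        simp only [Finset.mem_powerset] at he
        ext y
        have h1 := @he y
        have h2 := hnB y
        grind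
      · intro d hd
        simp only [Finset.mem_filter, Finset.mem_erase, Finset.mem_powerset] at hd
        have e1 : d ∩ B = c ∩ B := by
          ext y
          have h1 := @hd.1.2 y
          have h2 := @hd.2 y
          grind
        have e2 : c \ d = (c ∩ A) \ (d ∩ A) := by
          ext y
          have h2 := @hd.2 y
          have h3 := hor y
          grind
        rw [hfact d, e1, e2]
        ring
    · intro d hd hne
      simp only [Finset.mem_erase, Finset.mem_powerset] at hd
      by_contra hcon
      obtain ⟨y, hy, hyd⟩ := Finset.not_subset.1 hcon
      have hyc := Finset.mem_inter.1 hy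
      apply hne
      have hxd : x ∉ d := fun h => by simpa using hd.2 h
      rw [ih (c \ d) ?_ ?_ ?_, mul_zero]
      · exact Finset.sdiff_ssubset (hd.2.trans (Finset.erase_subset _ _))
          (Finset.nonempty_iff_ne_empty.2 hd.1)
      · exact fun h => hnB y (h (Finset.mem_sdiff.2 ⟨hyc.1, hyd⟩)) hyc.2
      · exact fun h => hxB (h (Finset.mem_sdiff.2 ⟨hx, hxd⟩))
  rw [hsum, ← Finset.mul_sum, hA2, hfact c, mul_comm (f (c ∩ A))] at hrec
  simpa using hrec
end

section
/- Let φ, ψ : ℝⁿ → ℂ be measurable functions such that for every subset a ⊆ {1,…,n} the functions x ↦ (∏_{i∈a} x_i)·φ(x) and x ↦ (∏_{i∈a} x_i)·ψ(x) are (Lebesgue) integrable on ℝⁿ. Define the moment maps f_φ(a) = ∫_{ℝⁿ} (∏_{i∈a} x_i) φ(x) dx and f_ψ(a) = ∫_{ℝⁿ} (∏_{i∈a} x_i) ψ(x) dx, and let (φ ⋆ ψ)(y) = ∫_{ℝⁿ} φ(x) ψ(y − x) dx denote the convolution of φ and ψ. Then for every a ⊆ {1,…,n}, the moment ∫_{ℝⁿ}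 (∏_{i∈a} y_i)(φ ⋆ ψ)(y) dy exists and equals (f_φ * f_ψ)(a) = Σ_{b ⊆ a} f_φ(b)·f_ψ(a \ b). -/
open Finset MeasureTheory

/-- The moment M-map of an integrable function `φ : ℝⁿ → ℂ`:
`f_φ(a) = ∫ (∏_{i∈a} x_i) φ(x) dx`. -/
noncomputable def momentMap (n : ℕ) (φ : (Fin n → ℝ) → ℂ) : Finset (Fin n) → ℂ :=
  fun a => ∫ x : Fin n → ℝ, (∏ i ∈ a, (x i : ℂ)) * φ x

/-- If all moments of `φ` and `ψ` exist, then the moments of the convolution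
`φ ⋆ ψ` exist and are given by the convolution product of the moment M-maps:
`∫ (∏_{i∈a} y_i)(φ ⋆ ψ)(y) dy = (f_φ * f_ψ)(a)`. -/
theorem momentMap_convolution (n : ℕ) (φ ψ : (Fin n → ℝ) → ℂ)
    (hφm : Measurable φ) (hψm : Measurable ψ)
    (hφ : ∀ a : Finset (Fin n),
      Integrable (fun x : Fin n → ℝ => (∏ i ∈ a, (x i : ℂ)) * φ x))
    (hψ : ∀ a : Finset (Fin n),
      Integrable (fun x : Fin n → ℝ => (∏ i ∈ a, (x i : ℂ)) * ψ x))
    (a : Finset (Fin n)) :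
    Integrable (fun y : Fin n → ℝ =>
        (∏ i ∈ a, (y i : ℂ)) * ∫ x : Fin n → ℝ, φ x * ψ (y - x)) ∧
    (∫ y : Fin n → ℝ, (∏ i ∈ a, (y i : ℂ)) * ∫ x : Fin n → ℝ, φ x * ψ (y - x)) =
      MMap.conv (momentMap n φ) (momentMap n ψ) a := by
  have hG : ∀ b : Finset (Fin n), Integrable (fun p : (Fin n → ℝ) × (Fin n → ℝ) =>
      ((∏ i ∈ b, (p.2 i : ℂ)) * φ p.2) *
        ((∏ i ∈ a \ b, ((p.1 - p.2) i : ℂ)) * ψ (p.1 - p.2))) (volume.prod volume) := by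
    intro b
    have h := (hφ b).convolution_integrand (ContinuousLinearMap.mul ℝ ℂ) (hψ (a \ b))
    simpa only [ContinuousLinearMap.mul_apply'] using h
  have hEq : ∀ y x : Fin n → ℝ, (∏ i ∈ a, (y i : ℂ)) * (φ x * ψ (y - x)) =
      ∑ b ∈ a.powerset, ((∏ i ∈ b, (x i : ℂ)) * φ x) *
        ((∏ i ∈ a \ b, ((y - x) i : ℂ)) * ψ (y - x)) := by
    intro y x
    have h := Finset.prod_add (fun i => (x i : ℂ)) (fun i => ((y - x) i : ℂ)) a
    have h2 : ∏ i ∈ a, (y i : ℂ) = ∏ i ∈ a, ((x i : ℂ) + ((y - x) i : ℂ)) := by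
      refine Finset.prod_congr rfl fun i _ => ?_
      simp
    rw [h2, h, Finset.sum_mul]
    refine Finset.sum_congr rfl fun b _ => ?_
    ring
  have hF : Integrable (fun p : (Fin n → ℝ) × (Fin n → ℝ) =>
      (∏ i ∈ a, (p.1 i : ℂ)) * (φ p.2 * ψ (p.1 - p.2))) (volume.prod volume) := by
    simp_rw [hEq]
    exact integrable_finsetSum _ fun b _ => hG b
  simp_rw [← integral_const_mul]
  refine ⟨hF.integral_prod_left, ?_⟩
  rw [← integral_prod _ hF]
  simp_rw [hEq]
  rw [integral_finsetSum _ fun b _ => hG b]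
  unfold MMap.conv momentMap
  refine Finset.sum_congr rfl fun b _ => ?_
  rw [integral_prod _ (hG b)]
  have h := integral_convolution (μ := volume) (ν := volume) (ContinuousLinearMap.mul ℝ ℂ) (hφ b) (hψ (a \ b))
  simpa only [MeasureTheory.convolution, ContinuousLinearMap.mul_apply'] using h
end

section
/- Let h : ℝⁿ → ℝ be infinitely differentiable with h(0) > 0. For a subset a = {a_1,…,a_k} ⊆ {1,…,n} let ∂_a h(0) denote the mixed partial derivative ∂^k h/∂x_{a_1}⋯∂x_{a_k} evaluated at 0 (with ∂_∅ h(0) = h(0)). Then for every nonempty a ⊆ {1,…,n}, ∂_a (log ∘ h)(0) = Σ_{p} (|p|−1)!·(−1)^{|p|−1}·(∏_{c ∈ p} ∂_c h(0)) / h(0)^{|p|}, the sum running over all set partitions p of a, with |p| the number of blocks of p. -/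
open Finset

/-- The mixed partial derivative `∂_a h(x)` of `h : ℝⁿ → E` with respect to the
(distinct) coordinates indexed by the finite set `a = {a_1 < ⋯ < a_k}`, defined by
feeding the corresponding standard basis vectors to the `k`-th iterated Fréchet
derivative.  For smooth `h` this is the usual mixed partial derivative
`∂^k h/∂x_{a_1}⋯∂x_{a_k}(x)` (independent of the order of differentiation), and
`∂_∅ h(x) = h(x)`. -/
noncomputable def mixedPartial {n : ℕ} {E : Type*} [NormedAddCommGroup E]
    [NormedSpace ℝ E] (h : (Fin n → ℝ) → E) (a : Finset (Fin n)) (x : Fin n → ℝ) : E :=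
  iteratedFDeriv ℝ a.card h x (fun i => Pi.single (a.orderEmbOfFin rfl i) 1)

theorem mp_eq {n k : ℕ} (h : (Fin n → ℝ) → ℝ) (a : Finset (Fin n)) (hk : a.card = k)
    (x : Fin n → ℝ) : mixedPartial h a x =
      iteratedFDeriv ℝ k h x (fun j => Pi.single (a.orderEmbOfFin hk j) 1) := by
  subst hk; rfl

theorem mp_empty {n : ℕ} (h : (Fin n → ℝ) → ℝ) (x : Fin n → ℝ) :
    mixedPartial h ∅ x = h x := by
  rw [mp_eq h ∅ (k := 0) rfl]; simp

theorem emb_insert {n : ℕ} (a : Finset (Fin n)) (i : Fin n) (hi : ∀ j ∈ a, i < j)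
    (hk : (insert i a).card = a.card + 1) (j : Fin (a.card + 1)) :
    (insert i a).orderEmbOfFin hk j =
      (Fin.cons i (a.orderEmbOfFin rfl) : Fin (a.card + 1) → Fin n) j := by
  refine (congrFun (Finset.orderEmbOfFin_unique (f := (Fin.cons i (a.orderEmbOfFin rfl) : Fin (a.card + 1) → Fin n)) hk ?_ ?_) j).symm
  · intro x
    refine Fin.cases ?_ (fun y => ?_) x
    · simp
    · simp
  · intro x y
    refine Fin.cases ?_ (fun x => ?_) x <;> refine Fin.cases ?_ (fun y => ?_) y
    · simp
    · intro _
      simpa using hi _ (Finset.orderEmbOfFin_mem a rfl y)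
    · intro hh; exact absurd hh (by simp)
    · intro hh; simpa using hh

theorem mp_diff {n : ℕ} (h : (Fin n → ℝ) → ℝ) (a : Finset (Fin n)) (x : Fin n → ℝ)
    (hh : ContDiffAt ℝ (⊤ : ℕ∞) h x) :
    DifferentiableAt ℝ (iteratedFDeriv ℝ a.card h) x :=
  (hh.iteratedFDeriv_right (m := 1) (i := a.card) (by exact_mod_cast le_top)).differentiableAt
    (by simp)

theorem mp_diff' {n : ℕ} (h : (Fin n → ℝ) → ℝ) (a : Finset (Fin n)) (x : Fin n → ℝ)
    (hh : ContDiffAt ℝ (⊤ : ℕ∞) h x) :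
    DifferentiableAt ℝ (mixedPartial h a) x :=
  (mp_diff h a x hh).continuousMultilinear_apply_const _

theorem mp_insert {n : ℕ} (h : (Fin n → ℝ) → ℝ) (a : Finset (Fin n)) (i : Fin n)
    (hi : ∀ j ∈ a, i < j) (x : Fin n → ℝ) (hh : ContDiffAt ℝ (⊤ : ℕ∞) h x) :
    mixedPartial h (insert i a) x = fderiv ℝ (mixedPartial h a) x (Pi.single i 1) := by
  have hk : (insert i a).card = a.card + 1 :=
    Finset.card_insert_of_notMem (fun hm => lt_irrefl _ (hi _ hm))
  rw [mp_eq h _ hk, iteratedFDeriv_succ_apply_left]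
  have : mixedPartial h a = fun y => iteratedFDeriv ℝ a.card h y
    (fun i => Pi.single (a.orderEmbOfFin rfl i) 1) := rfl
  rw [this, fderiv_continuousMultilinear_apply_const_apply (mp_diff h a x hh)]
  congr 1
  · rw [emb_insert a i hi hk]; rfl
  · funext j
    simp only [Fin.tail, emb_insert a i hi hk, Fin.cons_succ]

def addNew {n : ℕ} {a : Finset (Fin n)} {i : Fin n} (hi : i ∉ a) (p : Finpartition a) :
    Finpartition (insert i a) :=
  Finpartition.ofExistsUnique (insert {i} p.parts) (by
      intro c hc
      have := fun c hc => p.subset (a := c) hc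
      grind) (by
      intro j hj
      by_cases hji : j = i
      · subst hji
        have := fun c hc => p.subset (a := c) hc
        exact ⟨{j}, by simp, by grind⟩
      · obtain ⟨t, ht, ht'⟩ := p.existsUnique_mem (a := j) (by grind)
        exact ⟨t, by grind, by grind⟩) (by
      have := p.empty_notMem_parts
      have h2 := Finset.singleton_ne_empty i
      grind)

def addTo {n : ℕ} {a : Finset (Fin n)} {i : Fin n} (hi : i ∉ a) (p : Finpartition a)
    (c : Finset (Fin n)) (hc : c ∈ p.parts) :
    Finpartition (insert i a) :=
  Finpartition.ofExistsUnique (insert (insert i c) (p.parts.erase c)) (by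
      intro c hc
      have := fun c hc => p.subset (a := c) hc
      grind) (by
      have hs := fun c hc => p.subset (a := c) hc
      intro j hj
      by_cases hji : j = i
      · subst hji
        exact ⟨insert j c, by simp, by grind⟩
      · obtain ⟨t, ht, ht'⟩ := p.existsUnique_mem (a := j) (by grind)
        by_cases hjc : t = c
        · exact ⟨insert i c, by grind, by grind⟩
        · exact ⟨t, by grind, by grind⟩) (by
      have := p.empty_notMem_parts
      have h2 := Finset.insert_ne_empty i c
      grind)

def comb {n : ℕ} {a : Finset (Fin n)} {i : Fin n} (hi : i ∉ a) :
    (Σ p : Finpartition a, Option p.parts) → Finpartition (insert i a)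
  | ⟨p, none⟩ => addNew hi p
  | ⟨p, some c⟩ => addTo hi p c.1 c.2

def del {n : ℕ} {a : Finset (Fin n)} {i : Fin n} (hi : i ∉ a) (q : Finpartition (insert i a)) :
    Finpartition a :=
  Finpartition.ofExistsUnique ((q.parts.image (fun c => c.erase i)).erase ∅) (by
      have := fun c hc => q.subset (a := c) hc
      grind) (by
      intro j hj
      obtain ⟨t, ht, ht'⟩ := q.existsUnique_mem (a := j) (by grind)
      refine ⟨t.erase i, by grind, ?_⟩
      intro y hy
      simp only [Finset.mem_erase, Finset.mem_image] at hy
      obtain ⟨⟨_, c, hc, rfl⟩, hy⟩ := hy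
      rw [ht' c ⟨hc, by grind⟩]) (by simp)

theorem del_comb {n : ℕ} {a : Finset (Fin n)} {i : Fin n} (hi : i ∉ a)
    (z : Σ p : Finpartition a, Option p.parts) : del hi (comb hi z) = z.1 := by
  obtain ⟨p, o⟩ := z
  have hs := fun c hc => p.subset (a := c) hc
  have he := p.empty_notMem_parts
  have hni : ∀ c ∈ p.parts, c.erase i = c := fun c hc => by grind
  ext t
  rcases o with _ | ⟨c, hc⟩
  · simp only [del, comb, addNew, Finpartition.ofExistsUnique, Finset.mem_erase, Finset.mem_image]
    constructor
    · rintro ⟨h1, s, h2, rfl⟩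
      grind
    · intro ht
      exact ⟨by grind, t, by grind, hni t ht⟩
  · have hci : (insert i c).erase i = c := by grind
    simp only [del, comb, addTo, Finpartition.ofExistsUnique, Finset.mem_erase, Finset.mem_image]
    constructor
    · rintro ⟨h1, s, h2, rfl⟩
      grind
    · intro ht
      by_cases htc : t = c
      · exact ⟨by grind, insert i c, by grind, by grind⟩
      · exact ⟨by grind, t, by grind, hni t ht⟩

theorem comb_inj {n : ℕ} {a : Finset (Fin n)} {i : Fin n} (hi : i ∉ a) :
    Function.Injective (comb hi) := by
  intro z w hzw
  have h1 := del_comb hi z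
  have h2 := del_comb hi w
  rw [hzw, h2] at h1
  obtain ⟨p, o⟩ := z
  obtain ⟨p', o'⟩ := w
  simp only at h1
  subst h1
  have hs := fun c hc => p'.subset (a := c) hc
  have he := p'.empty_notMem_parts
  have hni : ∀ c ∈ p'.parts, i ∉ c := fun c hc => by grind
  have hpp := congrArg Finpartition.parts hzw
  congr 1
  rcases o with _ | ⟨c, hc⟩ <;> rcases o' with _ | ⟨c', hc'⟩
  · rfl
  · exfalso
    simp only [comb, addNew, addTo, Finpartition.ofExistsUnique] at hpp
    have h3 : {i} ∈ insert (insert i c') (p'.parts.erase c') := hpp ▸ Finset.mem_insert_self _ _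
    have h4 : ({i} : Finset (Fin n)) = insert i c' := by
      rcases Finset.mem_insert.1 h3 with h | h
      · exact h
      · exact absurd (Finset.mem_singleton_self i) (hni _ (Finset.mem_of_mem_erase h))
    have : c' = ∅ := by rw [← Finset.erase_insert (hni _ hc'), ← h4]; simp
    grind
  · exfalso
    simp only [comb, addNew, addTo, Finpartition.ofExistsUnique] at hpp
    have h3 : {i} ∈ insert (insert i c) (p'.parts.erase c) := hpp ▸ Finset.mem_insert_self _ _
    have h4 : ({i} : Finset (Fin n)) = insert i c := by
      rcases Finset.mem_insert.1 h3 with h | h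
      · exact h
      · exact absurd (Finset.mem_singleton_self i) (hni _ (Finset.mem_of_mem_erase h))
    have : c = ∅ := by rw [← Finset.erase_insert (hni _ hc), ← h4]; simp
    grind
  · simp only [comb, addTo, Finpartition.ofExistsUnique] at hpp
    have h3 : insert i c ∈ insert (insert i c') (p'.parts.erase c') :=
      hpp ▸ Finset.mem_insert_self _ _
    have h4 : insert i c = insert i c' := by
      rcases Finset.mem_insert.1 h3 with h | h
      · exact h
      · exact absurd (Finset.mem_insert_self i c) (hni _ (Finset.mem_of_mem_erase h))
    have : c = c' := by
      rw [← Finset.erase_insert (hni _ hc), ← Finset.erase_insert (hni _ hc'), h4]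
    subst this
    rfl

theorem comb_surj {n : ℕ} {a : Finset (Fin n)} {i : Fin n} (hi : i ∉ a) :
    Function.Surjective (comb hi) := by
  intro q
  have he := q.empty_notMem_parts
  obtain ⟨B, ⟨hB, hiB⟩, hu⟩ := q.existsUnique_mem (a := i) (by simp)
  have hd : ∀ c ∈ q.parts, c ≠ B → c.erase i = c := by grind
  have hmem : ∀ t, t ∈ (del hi q).parts ↔ t ≠ ∅ ∧ ∃ s ∈ q.parts, s.erase i = t := by
    intro t
    simp [del, Finpartition.ofExistsUnique]
  by_cases hBi : B.erase i = ∅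
  · refine ⟨⟨del hi q, none⟩, ?_⟩
    ext t
    simp only [comb, addNew, Finpartition.ofExistsUnique, Finset.mem_insert, hmem]
    have hBB : B = {i} := by rw [← Finset.insert_erase hiB, hBi]; rfl
    constructor
    · rintro (rfl | ⟨h1, s, h2, h3⟩)
      · exact hBB ▸ hB
      · have hsB : s ≠ B := by
          rintro rfl
          exact h1 (h3.symm.trans hBi)
        rw [← h3, hd s h2 hsB]; exact h2
    · intro ht
      by_cases htB : t = B
      · left; grind
      · exact Or.inr ⟨by grind, t, ht, hd t ht htB⟩
  · have hBd : B.erase i ∈ (del hi q).parts := (hmem _).2 ⟨hBi, B, hB, rfl⟩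
    refine ⟨⟨del hi q, some ⟨B.erase i, hBd⟩⟩, ?_⟩
    have hBB : insert i (B.erase i) = B := Finset.insert_erase hiB
    ext t
    simp only [comb, addTo, Finpartition.ofExistsUnique, Finset.mem_insert, Finset.mem_erase, hmem, hBB]
    constructor
    · rintro (rfl | ⟨h0, h1, s, h2, h3⟩)
      · exact hB
      · have hsB : s ≠ B := by
          rintro rfl
          exact h0 h3.symm
        rw [← h3, hd s h2 hsB]; exact h2
    · intro ht
      by_cases htB : t = B
      · left; exact htB
      · refine Or.inr ⟨?_, by grind, t, ht, hd t ht htB⟩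
        rintro rfl
        obtain ⟨j, hj⟩ := Finset.nonempty_iff_ne_empty.2 hBi
        exact htB (q.eq_of_mem_parts ht hB hj (Finset.mem_of_mem_erase hj))

theorem sum_insert_part {n : ℕ} {a : Finset (Fin n)} {i : Fin n} (hi : i ∉ a)
    (f : Finset (Finset (Fin n)) → ℝ) :
    ∑ q : Finpartition (insert i a), f q.parts =
      ∑ p : Finpartition a, (f (insert {i} p.parts) +
        ∑ c ∈ p.parts, f (insert (insert i c) (p.parts.erase c))) := by
  rw [← Function.Bijective.sum_comp ⟨comb_inj hi, comb_surj hi⟩ (fun q => f q.parts),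
    Fintype.sum_sigma]
  refine Finset.sum_congr rfl fun p _ => ?_
  rw [Fintype.sum_option]
  congr 1
  rw [← Finset.sum_coe_sort p.parts]
  rfl

noncomputable def gl : ℕ → ℝ → ℝ
  | 0, y => Real.log y
  | k + 1, y => (Nat.factorial k : ℝ) * (-1) ^ k / y ^ (k + 1)

theorem gl_deriv (k : ℕ) (y : ℝ) (hy : y ≠ 0) : HasDerivAt (gl k) (gl (k + 1) y) y := by
  cases k with
  | zero => 
    have := Real.hasDerivAt_log hy
    have e : gl 0 = Real.log := funext fun y => rfl
    rw [e]
    simpa [gl] using this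
  | succ k =>
    have h1 := ((hasDerivAt_pow (k + 1) y).inv (pow_ne_zero _ hy)).const_mul
      ((Nat.factorial k : ℝ) * (-1) ^ k)
    have e : gl (k + 1) = fun y => ((Nat.factorial k : ℝ) * (-1) ^ k) * (y ^ (k + 1))⁻¹ := by
      funext y; simp [gl, div_eq_mul_inv]
    rw [e]
    refine h1.congr_deriv ?_
    simp only [gl, Nat.factorial_succ]
    push_cast
    field_simp
    ring

theorem main_aux {n : ℕ} (h : (Fin n → ℝ) → ℝ) (hh : ContDiff ℝ (⊤ : ℕ∞) h)
    (a : Finset (Fin n)) : ∀ x, 0 < h x → mixedPartial (fun x => Real.log (h x)) a x =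
      ∑ p : Finpartition a, gl p.parts.card (h x) * ∏ c ∈ p.parts, mixedPartial h c x := by
  induction a using Finset.induction_on_min with
  | empty =>
    intro x hx
    let _ : Unique (Finpartition (∅ : Finset (Fin n))) :=
      inferInstanceAs (Unique (Finpartition (⊥ : Finset (Fin n))))
    rw [mp_empty, Fintype.sum_unique]
    have : (default : Finpartition (∅ : Finset (Fin n))).parts = ∅ := rfl
    simp [this, gl]
  | insert i a hi ih =>
    intro x hx
    have hia : i ∉ a := fun hm => lt_irrefl _ (hi _ hm)
    have hev : mixedPartial (fun x => Real.log (h x)) a =ᶠ[nhds x] fun x =>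
        ∑ p : Finpartition a, gl p.parts.card (h x) * ∏ c ∈ p.parts, mixedPartial h c x := by
      filter_upwards [hh.continuous.continuousAt.eventually (lt_mem_nhds hx)] with y hy
      exact ih y hy
    rw [mp_insert _ a i hi x (hh.contDiffAt.log hx.ne'), hev.fderiv_eq,
      sum_insert_part hia (fun P => gl P.card (h x) * ∏ c ∈ P, mixedPartial h c x)]
    have hd : ∀ c, HasFDerivAt (mixedPartial h c) (fderiv ℝ (mixedPartial h c) x) x := fun c =>
      (mp_diff' h c x hh.contDiffAt).hasFDerivAt
    have hd0 : HasFDerivAt h (fderiv ℝ h x) x :=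
      ((hh.differentiable (by simp)) x).hasFDerivAt
    have he : mixedPartial h ∅ = h := funext (mp_empty h)
    have key := HasFDerivAt.fun_sum (u := (Finset.univ : Finset (Finpartition a)))
      (fun p _ => ((gl_deriv p.parts.card (h x) hx.ne').comp_hasFDerivAt x hd0).mul
        (HasFDerivAt.finset_prod (u := p.parts) (fun c _ => hd c)))
    have key2 := congrArg (fun L => L (Pi.single i 1)) key.fderiv
    refine Eq.trans ?_ (key2.trans ?_)
    · congr 2
    simp only [ContinuousLinearMap.sum_apply]
    refine Finset.sum_congr rfl fun p _ => ?_
    have hs := fun c hc => p.subset (a := c) hc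
    have hni : ∀ c ∈ p.parts, i ∉ c := fun c hc hm => hia (hs c hc hm)
    have hins : ∀ c ⊆ a, mixedPartial h (insert i c) x =
        fderiv ℝ (mixedPartial h c) x (Pi.single i 1) := fun c hc =>
      mp_insert h c i (fun j hj => hi j (hc hj)) x hh.contDiffAt
    have hsing : {i} ∉ p.parts := fun hm => hni _ hm (Finset.mem_singleton_self i)
    have h1 : mixedPartial h {i} x = fderiv ℝ h x (Pi.single i 1) := by
      have := hins ∅ (by simp)
      rwa [he] at this
    rw [Finset.card_insert_of_notMem hsing, Finset.prod_insert hsing, h1]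
    simp only [ContinuousLinearMap.add_apply, ContinuousLinearMap.smul_apply,
      ContinuousLinearMap.sum_apply, smul_eq_mul, Function.comp_apply]
    rw [add_comm, Finset.mul_sum]
    congr 1
    · ring
    · refine Finset.sum_congr rfl fun c hc => ?_
      have hn : insert i c ∉ p.parts.erase c := fun hm =>
        hni _ (Finset.mem_of_mem_erase hm) (Finset.mem_insert_self i c)
      rw [Finset.card_insert_of_notMem hn, Finset.prod_insert hn, hins c (hs c hc),
        Finset.card_erase_add_one hc]
      ring

/-- Faà di Bruno for the logarithm: if `h : ℝⁿ → ℝ` is smooth with `h(0) > 0`,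
then for every nonempty `a ⊆ {1,…,n}`,
`∂_a(log ∘ h)(0) = ∑_p (|p|−1)!·(−1)^{|p|−1}·(∏_{c∈p} ∂_c h(0))/h(0)^{|p|}`,
summed over all set partitions `p` of `a`. -/
theorem mixedPartial_log_comp (n : ℕ) (h : (Fin n → ℝ) → ℝ)
    (hh : ContDiff ℝ (⊤ : ℕ∞) h) (h0 : 0 < h 0)
    (a : Finset (Fin n)) (ha : a.Nonempty) :
    mixedPartial (fun x => Real.log (h x)) a 0 =
      ∑ p : Finpartition a,
        (Nat.factorial (p.parts.card - 1) : ℝ) * (-1 : ℝ) ^ (p.parts.card - 1) *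
          (∏ c ∈ p.parts, mixedPartial h c 0) / (h 0) ^ p.parts.card := by
  rw [main_aux h hh a 0 h0]
  refine Finset.sum_congr rfl fun p _ => ?_
  obtain ⟨k, hk⟩ : ∃ k, p.parts.card = k + 1 :=
    Nat.exists_eq_succ_of_ne_zero
      (Finset.card_pos.2 (p.parts_nonempty ha.ne_empty)).ne'
  rw [hk]
  simp only [gl, Nat.add_sub_cancel]
  ring
end

section
/- Let h : ℝⁿ → ℝ be infinitely differentiable with h(0) ≠ 0. For a subset a ⊆ {1,…,n} let ∂_a h(0) denote the mixed partial derivative of h with respect to the coordinates indexed by a, evaluated at 0 (with ∂_∅ h(0) = h(0)). Then for every nonempty a ⊆ {1,…,n}, ∂_a (1/h)(0) = Σ_{p} |p|!·(−1)^{|p|}·(∏_{c ∈ p} ∂_c h(0)) / h(0)^{|p|+1}, the sum running over all set partitions p of a, with |p| the number of blocks of p. -/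
open Finset

namespace MPInv

lemma mp_eq {n : ℕ} (f : (Fin n → ℝ) → ℝ) (a : Finset (Fin n)) (x : Fin n → ℝ)
    (k : ℕ) (hk : a.card = k) :
    mixedPartial f a x
      = iteratedFDeriv ℝ k f x (fun i => Pi.single (a.orderEmbOfFin hk i) 1) := by
  subst hk; rfl

lemma mp_empty {n : ℕ} (f : (Fin n → ℝ) → ℝ) (x : Fin n → ℝ) :
    mixedPartial f ∅ x = f x := by
  rw [mp_eq f ∅ x 0 rfl]; simp

lemma emb_insert {n : ℕ} (i : Fin n) (s : Finset (Fin n)) (hi : ∀ j ∈ s, i < j)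
    (hk : (insert i s).card = s.card + 1) :
    (Fin.cons i (s.orderEmbOfFin rfl) : Fin (s.card + 1) → Fin n)
      = (insert i s).orderEmbOfFin hk := by
  apply Finset.orderEmbOfFin_unique
  · intro j
    refine Fin.cases ?_ (fun j => ?_) j
    · simp
    · simp only [Fin.cons_succ]
      exact mem_insert_of_mem (s.orderEmbOfFin_mem rfl j)
  · intro j k hjk
    induction j using Fin.cases with
    | zero =>
      induction k using Fin.cases with
      | zero => exact absurd hjk (lt_irrefl _)
      | succ k => simpa using hi _ (s.orderEmbOfFin_mem rfl k)
    | succ j =>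
      induction k using Fin.cases with
      | zero => exact absurd hjk (by simp)
      | succ k => simpa using hjk

lemma mp_diff {n : ℕ} (f : (Fin n → ℝ) → ℝ) (s : Finset (Fin n)) (x : Fin n → ℝ)
    (hf : ContDiffAt ℝ (⊤ : ℕ∞) f x) : DifferentiableAt ℝ (mixedPartial f s) x := by
  have h1 : DifferentiableAt ℝ (iteratedFDeriv ℝ s.card f) x :=
    hf.differentiableAt_iteratedFDeriv (by exact_mod_cast WithTop.coe_lt_top _)
  exact h1.continuousMultilinear_apply_const _

lemma mp_insert {n : ℕ} (f : (Fin n → ℝ) → ℝ) (i : Fin n) (s : Finset (Fin n))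
    (hi : ∀ j ∈ s, i < j) (x : Fin n → ℝ) (hf : ContDiffAt ℝ (⊤ : ℕ∞) f x) :
    mixedPartial f (insert i s) x = fderiv ℝ (mixedPartial f s) x (Pi.single i 1) := by
  have his : i ∉ s := fun h => lt_irrefl _ (hi i h)
  have h1 : DifferentiableAt ℝ (iteratedFDeriv ℝ s.card f) x :=
    hf.differentiableAt_iteratedFDeriv (by exact_mod_cast WithTop.coe_lt_top _)
  have hk := card_insert_of_notMem his
  rw [mp_eq f _ x _ hk, ← emb_insert i s hi hk, iteratedFDeriv_succ_apply_left]
  unfold mixedPartial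
  rw [fderiv_continuousMultilinear_apply_const_apply h1]
  rfl

lemma leibniz {n : ℕ} (f g : (Fin n → ℝ) → ℝ) (U : Set (Fin n → ℝ)) (hU : IsOpen U)
    (hf : ∀ x ∈ U, ContDiffAt ℝ (⊤ : ℕ∞) f x) (hg : ∀ x ∈ U, ContDiffAt ℝ (⊤ : ℕ∞) g x)
    (a : Finset (Fin n)) : ∀ x ∈ U, mixedPartial (fun y => f y * g y) a x =
      ∑ b ∈ a.powerset, mixedPartial f b x * mixedPartial g (a \ b) x := by
  induction a using Finset.induction_on_min with
  | empty => intro x _; simp [mp_empty]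
  | insert i s hi ih =>
    intro x hx
    have his : i ∉ s := fun h => lt_irrefl _ (hi i h)
    rw [mp_insert _ i s hi x ((hf x hx).mul (hg x hx))]
    have he : mixedPartial (fun y => f y * g y) s =ᶠ[nhds x]
        fun y => ∑ b ∈ s.powerset, mixedPartial f b y * mixedPartial g (s \ b) y :=
      Filter.eventually_of_mem (hU.mem_nhds hx) ih
    have df := fun b => mp_diff f b x (hf x hx)
    have dg := fun b => mp_diff g b x (hg x hx)
    rw [he.fderiv_eq, fderiv_fun_sum (fun b _ => (df b).fun_mul (dg (s \ b))), sum_powerset_insert his,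
      ← sum_add_distrib, _root_.sum_apply]
    refine sum_congr rfl fun b hb => ?_
    have hb := mem_powerset.1 hb
    have hib : i ∉ b := fun h => his (hb h)
    rw [fderiv_fun_mul (df b) (dg _), insert_sdiff_of_notMem _ hib, insert_sdiff_insert,
      sdiff_insert_of_notMem his,
      mp_insert f i b (fun j hj => hi j (hb hj)) x (hf x hx),
      mp_insert g i (s \ b) (fun j hj => hi j (mem_sdiff.1 hj).1) x (hg x hx)]
    simp
    ring

lemma parts_split {α : Type*} [DecidableEq α] (a : Finset α)
    (F : Finset α → Finset (Finset α) → ℝ) :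
    ∑ b ∈ a.powerset.erase ∅, ∑ q : Finpartition (a \ b), F b q.parts =
      ∑ p : Finpartition a, ∑ b ∈ p.parts, F b (p.parts.erase b) := by
  rw [sum_sigma', sum_sigma']
  have nm : ∀ (b : Finset α) (q : Finpartition (a \ b)), b ≠ ∅ → b ∉ q.parts := by
    intro b q hb hbq
    obtain ⟨x, hx⟩ := nonempty_iff_ne_empty.2 hb
    exact (mem_sdiff.1 (q.le hbq hx)).2 hx
  refine sum_bij (fun x hx => ⟨x.2.extend (b := x.1) (c := a)
      (mem_erase.1 (mem_sigma.1 hx).1).1 sdiff_disjoint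
      (sdiff_union_of_subset (mem_powerset.1 (mem_erase.1 (mem_sigma.1 hx).1).2)), x.1⟩)
    ?_ ?_ ?_ ?_
  · intro x hx
    simp
  · rintro ⟨b, q⟩ hx ⟨b', q'⟩ hx' heq
    have hb := (mem_erase.1 (mem_sigma.1 hx).1).1
    have h2 : b = b' := congrArg (fun z => z.2) heq
    subst h2
    have h1 := congrArg (fun z => z.1.parts) heq
    simp only [Finpartition.extend_parts] at h1
    have h3 := congrArg (fun z => z.erase b) h1
    simp only [erase_insert (nm b q hb), erase_insert (nm b q' hb)] at h3
    rw [Finpartition.ext h3]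
  · rintro ⟨p, b⟩ hx
    have hb : b ∈ p.parts := (mem_sigma.1 hx).2
    have hs : (p.parts.erase b).sup id = a \ b := by
      ext x
      simp only [mem_sup, mem_erase, mem_sdiff, id]
      constructor
      · rintro ⟨c, ⟨hcb, hc⟩, hxc⟩
        exact ⟨p.le hc hxc, fun hxb => hcb (p.eq_of_mem_parts hc hb hxc hxb)⟩
      · rintro ⟨hxa, hxb⟩
        obtain ⟨c, hc, hxc⟩ := p.exists_mem hxa
        exact ⟨c, ⟨fun h => hxb (h ▸ hxc), hc⟩, hxc⟩
    refine ⟨⟨b, p.ofSubset (erase_subset b _) hs⟩, ?_, ?_⟩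
    · simpa using ⟨p.ne_empty hb, p.le hb⟩
    · have : ∀ p' : Finpartition a, p'.parts = p.parts →
          (⟨p', b⟩ : (_ : Finpartition a) × Finset α) = ⟨p, b⟩ := by
        intro p' h
        rw [Finpartition.ext h]
      apply this
      simp [insert_erase hb]
  · rintro ⟨b, q⟩ hx
    have hb := (mem_erase.1 (mem_sigma.1 hx).1).1
    simp [erase_insert (nm b q hb)]

end MPInv

/-- Faà di Bruno for the reciprocal: if `h : ℝⁿ → ℝ` is smooth with `h(0) ≠ 0`,
then for every nonempty `a ⊆ {1,…,n}`,
`∂_a(1/h)(0) = ∑_p |p|!·(−1)^{|p|}·(∏_{c∈p} ∂_c h(0))/h(0)^{|p|+1}`,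
summed over all set partitions `p` of `a`. -/
theorem mixedPartial_inv_comp (n : ℕ) (h : (Fin n → ℝ) → ℝ)
    (hh : ContDiff ℝ (⊤ : ℕ∞) h) (h0 : h 0 ≠ 0)
    (a : Finset (Fin n)) (ha : a.Nonempty) :
    mixedPartial (fun x => 1 / h x) a 0 =
      ∑ p : Finpartition a,
        (Nat.factorial p.parts.card : ℝ) * (-1 : ℝ) ^ p.parts.card *
          (∏ c ∈ p.parts, mixedPartial h c 0) / (h 0) ^ (p.parts.card + 1) := by
  clear ha
  have hU : IsOpen {x | h x ≠ 0} := isOpen_ne_fun hh.continuous continuous_const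
  induction a using Finset.strongInduction with
  | H a ih =>
  rcases a.eq_empty_or_nonempty with rfl | ha
  · rw [MPInv.mp_empty]
    have hp : ∀ p : Finpartition (∅ : Finset (Fin n)), p.parts = ∅ :=
      fun p => p.parts_eq_empty_iff.2 rfl
    have : Unique (Finpartition (∅ : Finset (Fin n))) :=
      inferInstanceAs (Unique (Finpartition (⊥ : Finset (Fin n))))
    simp [hp]
  have hL := MPInv.leibniz h (fun x => 1 / h x) _ hU (fun x _ => hh.contDiffAt)
    (fun x hx => contDiffAt_const.div hh.contDiffAt hx) a 0 h0
  have hz : mixedPartial (fun y => h y * (1 / h y)) a 0 = 0 := by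
    have he : (fun y => h y * (1 / h y)) =ᶠ[nhds 0] fun _ => (1 : ℝ) :=
      Filter.eventually_of_mem (hU.mem_nhds h0) (fun y hy => mul_one_div_cancel hy)
    unfold mixedPartial
    rw [(Filter.EventuallyEq.iteratedFDeriv ℝ he _).eq_of_nhds, iteratedFDeriv_const_of_ne ha.card_pos.ne']
    simp
  rw [hz, ← add_sum_erase _ _ (empty_mem_powerset a), MPInv.mp_empty, sdiff_empty] at hL
  rw [sum_congr rfl (fun b hb => by
    rw [ih (a \ b) (sdiff_ssubset (mem_powerset.1 (mem_erase.1 hb).2)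
      (nonempty_iff_ne_empty.2 (mem_erase.1 hb).1)), mul_sum]), 
    MPInv.parts_split a (fun b P => mixedPartial h b 0 * ((Nat.factorial P.card : ℝ) *
      (-1 : ℝ) ^ P.card * (∏ c ∈ P, mixedPartial h c 0) / (h 0) ^ (P.card + 1)))] at hL
  rw [← mul_right_inj' h0, eq_neg_of_add_eq_zero_left hL.symm, mul_sum, ← sum_neg_distrib]
  refine sum_congr rfl fun p _ => ?_
  obtain ⟨m, hm⟩ : ∃ m, p.parts.card = m + 1 :=
    Nat.exists_eq_succ_of_ne_zero (card_pos.2 (p.parts_nonempty ha.ne_empty)).ne'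
  have : ∀ b ∈ p.parts, mixedPartial h b 0 * ((Nat.factorial (p.parts.erase b).card : ℝ) *
      (-1 : ℝ) ^ (p.parts.erase b).card * (∏ c ∈ p.parts.erase b, mixedPartial h c 0) /
        (h 0) ^ ((p.parts.erase b).card + 1)) =
      (Nat.factorial m : ℝ) * (-1 : ℝ) ^ m * (∏ c ∈ p.parts, mixedPartial h c 0) /
        (h 0) ^ (m + 1) := by
    intro b hb
    rw [card_erase_of_mem hb, hm, ← mul_prod_erase _ _ hb, Nat.add_sub_cancel]
    ring
  rw [sum_congr rfl this, sum_const, hm, Nat.factorial_succ]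
  simp only [nsmul_eq_mul]
  push_cast
  field_simp
  ring
end

section
/- Let Ω = {1,…,n}. For each subset c ⊆ Ω let z(c) : ℝⁿ → ℂ be an infinitely differentiable function such that z(c)(γ) depends only on the coordinates γ_j with j ∈ c (i.e. z(c)(γ) = z(c)(γ') whenever γ_j = γ'_j for all j ∈ c), and suppose z(∅) is the constant function 1. For subsets b ⊆ a ⊆ Ω define z_b(c) = ∂^γ_{b∩c} z(c)|_{γ=0}, the mixed partial derivative of z(c) with respect to the coordinates indexed by b ∩ c, evaluated at γ = 0. Then the mixed partial derivative with respect to the coordinates indexed by b of the function γ ↦ Σ_{p} (|p|−1)!·(−1)^{|p|−1} ∏_{c ∈ p} z(c)(γ) (sum over set partitions p of a), evaluated at γ = 0, equals Σ_{p} (|p|−1)!·(−1)^{|p|−1} ∏_{c ∈ p} z_b(c). -/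
open Finset

/-- Iterated directional derivative along a list of coordinates. -/
noncomputable def listD {n : ℕ} (f : (Fin n → ℝ) → ℂ) : List (Fin n) → (Fin n → ℝ) → ℂ
  | [] => f
  | i :: l => fun x => fderiv ℝ (listD f l) x (Pi.single i 1)

theorem listD_smooth {n : ℕ} {f : (Fin n → ℝ) → ℂ} (hf : ContDiff ℝ (⊤ : ℕ∞) f)
    (l : List (Fin n)) : ContDiff ℝ (⊤ : ℕ∞) (listD f l) := by
  induction l with
  | nil => exact hf
  | cons i l ih =>
    have h : ContDiff ℝ (⊤ : ℕ∞) (fderiv ℝ (listD f l)) := ih.fderiv_right (by simp)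
    exact h.clm_apply contDiff_const

theorem listD_diff {n : ℕ} {f : (Fin n → ℝ) → ℂ} (hf : ContDiff ℝ (⊤ : ℕ∞) f)
    (l : List (Fin n)) : Differentiable ℝ (listD f l) :=
  (listD_smooth hf l).differentiable (by simp)

theorem iter_eq_listD {n : ℕ} {f : (Fin n → ℝ) → ℂ} (hf : ContDiff ℝ (⊤ : ℕ∞) f)
    (k : ℕ) : ∀ (m : Fin k → Fin n) (x : Fin n → ℝ),
    iteratedFDeriv ℝ k f x (fun i => Pi.single (m i) 1) = listD f (List.ofFn m) x := by
  induction k with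
  | zero => intro m x; simp [listD]
  | succ k ih =>
    intro m x
    rw [iteratedFDeriv_succ_apply_left, List.ofFn_succ]
    simp only [listD]
    have h2 : listD f (List.ofFn fun i => m i.succ) = fun y =>
        iteratedFDeriv ℝ k f y (fun i => Pi.single (m i.succ) 1) := by
      funext y; exact (ih _ y).symm
    rw [h2]
    have hd : DifferentiableAt ℝ (iteratedFDeriv ℝ k f) x :=
      (hf.differentiable_iteratedFDeriv (by exact_mod_cast ENat.natCast_lt_top k)) x
    rw [fderiv_continuousMultilinear_apply_const_apply hd]
    rfl

theorem mixedPartial_eq_listD {n : ℕ} {f : (Fin n → ℝ) → ℂ} (hf : ContDiff ℝ (⊤ : ℕ∞) f)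
    (a : Finset (Fin n)) (x : Fin n → ℝ) : mixedPartial f a x = listD f a.sort x := by
  unfold mixedPartial
  rw [iter_eq_listD hf]
  congr 1
  apply List.ext_getElem
  · simp
  · intro i h1 h2
    simp [Finset.orderEmbOfFin_apply]

theorem listD_dep {n : ℕ} {f : (Fin n → ℝ) → ℂ} {c : Finset (Fin n)}
    (hd : ∀ γ γ' : Fin n → ℝ, (∀ j ∈ c, γ j = γ' j) → f γ = f γ')
    (l : List (Fin n)) : ∀ γ γ' : Fin n → ℝ, (∀ j ∈ c, γ j = γ' j) →
      listD f l γ = listD f l γ' := by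
  induction l with
  | nil => exact hd
  | cons i l ih =>
    intro γ γ' h
    simp only [listD]
    have h2 : (fun x => listD f l (x + (γ' - γ))) = listD f l := by
      funext x
      apply ih
      intro j hj
      simp [h j hj]
    have h3 := fderiv_comp_add_right (𝕜 := ℝ) (f := listD f l) (x := γ) (γ' - γ)
    rw [h2] at h3
    rw [h3]; simp

theorem fderiv_dep {n : ℕ} {f : (Fin n → ℝ) → ℂ} {c : Finset (Fin n)}
    (hd : ∀ γ γ' : Fin n → ℝ, (∀ j ∈ c, γ j = γ' j) → f γ = f γ')
    (hf : Differentiable ℝ f) (x : Fin n → ℝ) {i : Fin n} (hi : i ∉ c) :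
    fderiv ℝ f x (Pi.single i 1) = 0 := by
  rw [← (hf x).lineDeriv_eq_fderiv]
  unfold lineDeriv
  have : (fun t : ℝ => f (x + t • Pi.single i 1)) = fun _ => f x := by
    funext t
    apply hd
    intro j hj
    have : j ≠ i := fun h => hi (h ▸ hj)
    simp [this]
  rw [this]; simp

theorem listD_sum {n : ℕ} {ι : Type*} (s : Finset ι) (k : ι → ℂ) (f : ι → (Fin n → ℝ) → ℂ)
    (hf : ∀ p, ContDiff ℝ (⊤ : ℕ∞) (f p)) (l : List (Fin n)) :
    listD (fun x => ∑ p ∈ s, k p * f p x) l = fun x => ∑ p ∈ s, k p * listD (f p) l x := by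
  induction l with
  | nil => rfl
  | cons i l ih =>
    funext x
    simp only [listD]
    rw [ih, fderiv_fun_sum (fun p _ => ((listD_diff (hf p) l) x).const_mul (k p))]
    rw [ContinuousLinearMap.sum_apply]
    refine Finset.sum_congr rfl fun p _ => ?_
    rw [fderiv_const_mul ((listD_diff (hf p) l) x)]
    simp

theorem listD_prod {n : ℕ} (z : Finset (Fin n) → (Fin n → ℝ) → ℂ)
    (hsmooth : ∀ c, ContDiff ℝ (⊤ : ℕ∞) (z c))
    (hdep : ∀ c, ∀ γ γ' : Fin n → ℝ, (∀ j ∈ c, γ j = γ' j) → z c γ = z c γ')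
    (s : Finset (Finset (Fin n))) (l : List (Fin n))
    (hl : ∀ i ∈ l, ∃! c, c ∈ s ∧ i ∈ c) :
    listD (fun x => ∏ c ∈ s, z c x) l =
      fun x => ∏ c ∈ s, listD (z c) (l.filter (· ∈ c)) x := by
  induction l with
  | nil => rfl
  | cons i l ih =>
    funext x
    simp only [listD]
    rw [ih (fun j hj => hl j (List.mem_cons_of_mem _ hj))]
    obtain ⟨c₀, ⟨hc₀, hi⟩, huniq⟩ := hl i List.mem_cons_self
    rw [fderiv_finsetProd (fun c _ => (listD_diff (hsmooth c) _) x)]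
    rw [ContinuousLinearMap.sum_apply, Finset.sum_eq_single_of_mem c₀ hc₀]
    · rw [← Finset.mul_prod_erase s _ hc₀]
      rw [List.filter_cons_of_pos (by simpa using hi)]
      simp only [listD, ContinuousLinearMap.smul_apply, smul_eq_mul]
      rw [mul_comm]
      congr 1
      refine Finset.prod_congr rfl fun c hc => ?_
      rw [Finset.mem_erase] at hc
      have hic : i ∉ c := fun h => hc.1 (huniq c ⟨hc.2, h⟩)
      rw [List.filter_cons_of_neg (by simpa using hic)]
    · intro c hc hne
      have hic : i ∉ c := fun h => hne (huniq c ⟨hc, h⟩)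
      rw [ContinuousLinearMap.smul_apply,
        fderiv_dep (listD_dep (hdep c) _) (listD_diff (hsmooth c) _) x hic, smul_zero]

theorem sort_inter {n : ℕ} (b c : Finset (Fin n)) :
    (b ∩ c).sort = b.sort.filter (· ∈ c) := by
  apply List.Perm.eq_of_pairwise (le := (· ≤ ·))
  · intro a b _ _ h1 h2; exact le_antisymm h1 h2
  · exact Finset.pairwise_sort _ _
  · exact (Finset.pairwise_sort _ _).filter _
  · rw [List.perm_ext_iff_of_nodup (Finset.sort_nodup _ _) ((Finset.sort_nodup _ _).filter _)]
    intro x; simp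

/-- Differentiating a cumulant-type partition sum term by term: if each `z(c)`
is smooth and depends only on the coordinates `γ_j` with `j ∈ c`, and `z(∅) ≡ 1`,
then for `b ⊆ a` the mixed partial `∂^γ_b` at `γ = 0` of
`γ ↦ ∑_p (|p|−1)!(−1)^{|p|−1} ∏_{c∈p} z(c)(γ)` equals
`∑_p (|p|−1)!(−1)^{|p|−1} ∏_{c∈p} z_b(c)` with `z_b(c) = ∂^γ_{b∩c} z(c)|_{γ=0}`. -/
theorem mixedPartial_partition_sum (n : ℕ) (z : Finset (Fin n) → (Fin n → ℝ) → ℂ)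
    (hsmooth : ∀ c, ContDiff ℝ (⊤ : ℕ∞) (z c))
    (hdep : ∀ c, ∀ γ γ' : Fin n → ℝ, (∀ j ∈ c, γ j = γ' j) → z c γ = z c γ')
    (hempty : ∀ γ, z ∅ γ = 1)
    (a b : Finset (Fin n)) (hba : b ⊆ a) :
    mixedPartial (fun γ => ∑ p : Finpartition a,
        (Nat.factorial (p.parts.card - 1) : ℂ) * (-1 : ℂ) ^ (p.parts.card - 1) *
          ∏ c ∈ p.parts, z c γ) b 0 =
      ∑ p : Finpartition a,
        (Nat.factorial (p.parts.card - 1) : ℂ) * (-1 : ℂ) ^ (p.parts.card - 1) *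
          ∏ c ∈ p.parts, mixedPartial (z c) (b ∩ c) 0 := by
  have hp : ∀ p : Finpartition a, ContDiff ℝ (⊤ : ℕ∞) (fun γ => ∏ c ∈ p.parts, z c γ) :=
    fun p => contDiff_prod fun c _ => hsmooth c
  rw [mixedPartial_eq_listD (ContDiff.sum fun p _ => contDiff_const.mul (hp p)),
    listD_sum _ _ _ hp]
  refine Finset.sum_congr rfl fun p _ => ?_
  congr 1
  rw [listD_prod z hsmooth hdep]
  · refine Finset.prod_congr rfl fun c _ => ?_
    rw [mixedPartial_eq_listD (hsmooth c), sort_inter]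
  · intro i hi
    exact p.existsUnique_mem (hba (by simpa using hi))
end

section
/- Let (S, μ) be a probability space and let X_1, …, X_n : S → ℝ be bounded measurable random variables. Define the moment M-map f(a) = E[∏_{j∈a} X_j] for a ⊆ {1,…,n} (so f(∅) = 1), and define h : ℝⁿ → ℝ by h(γ) = E[exp(Σ_{j=1}^n γ_j X_j)]. Then h is infinitely differentiable, h(γ) > 0 for all γ, and for every nonempty a ⊆ {1,…,n} the mixed partial derivative of log ∘ h with respect to the coordinates indexed by a, evaluated at γ = 0, equals the cumulant log* f(a) = Σ_{p} (|p|−1)!·(−1)^{|p|−1} ∏_{c ∈ p} f(c), the sum running over all set partitions p of a. -/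
open Finset

def IsPt {α : Type*} [DecidableEq α] (a : Finset α) (P : Finset (Finset α)) : Prop :=
  (∀ p ∈ P, p ⊆ a) ∧ ∅ ∉ P ∧ (∀ x ∈ a, ∃ t ∈ P, x ∈ t) ∧
    (∀ s ∈ P, ∀ t ∈ P, ∀ x, x ∈ s → x ∈ t → s = t)

lemma isPt_parts {α : Type*} [DecidableEq α] {a : Finset α} (p : Finpartition a) :
    IsPt a p.parts := by
  refine ⟨fun c hc => p.le hc, p.bot_notMem, fun x hx => p.exists_mem hx, ?_⟩
  intro s hs t ht x hxs hxt
  exact p.eq_of_mem_parts hs ht hxs hxt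

def IsPt.mk {α : Type*} [DecidableEq α] {a : Finset α} {P : Finset (Finset α)}
    (h : IsPt a P) : Finpartition a :=
  Finpartition.ofExistsUnique P h.1 (fun x hx => by
    obtain ⟨t, ht, hxt⟩ := h.2.2.1 x hx
    exact ⟨t, ⟨ht, hxt⟩, fun s hs => h.2.2.2 s hs.1 t ht x hs.2 hxt⟩) h.2.1

lemma IsPt.mk_parts {α : Type*} [DecidableEq α] {a : Finset α} {P : Finset (Finset α)}
    (h : IsPt a P) : h.mk.parts = P := rfl

lemma isPt_ext {α : Type*} [DecidableEq α] {a : Finset α} {P : Finset (Finset α)} {j : α}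
    (hj : j ∉ a) (h : IsPt a P) (c : Finset α) (hc : c ∈ insert ∅ P) :
    IsPt (insert j a) (insert (insert j c) (P.erase c)) := by
  obtain ⟨h1, h2, h3, h4⟩ := h
  rw [mem_insert] at hc
  refine ⟨?_, ?_, ?_, ?_⟩
  · intro p hp
    rw [mem_insert, mem_erase] at hp
    rcases hp with rfl | hp
    · rcases hc with rfl | hc
      · simp
      · exact insert_subset_insert _ (h1 c hc)
    · exact (h1 p hp.2).trans (subset_insert _ _)
  · grind
  · intro x hx
    rw [mem_insert] at hx
    rcases hx with rfl | hx
    · exact ⟨insert x c, by simp, by simp⟩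
    · obtain ⟨t, ht, hxt⟩ := h3 x hx
      by_cases htc : t = c
      · exact ⟨insert j c, by simp, by simp [← htc, hxt]⟩
      · exact ⟨t, by simp [htc, ht], hxt⟩
  · have h5 : ∀ s ∈ P, j ∉ s := fun s hs hjs => hj (h1 s hs hjs)
    intro s hs t ht x hxs hxt
    rw [mem_insert, mem_erase] at hs ht
    rcases hs with rfl | hs <;> rcases ht with rfl | ht
    · rfl
    · grind
    · grind
    · exact h4 s hs.2 t ht.2 x hxs hxt

lemma isPt_res {α : Type*} [DecidableEq α] {a : Finset α} {Q : Finset (Finset α)} {j : α}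
    (hj : j ∉ a) (h : IsPt (insert j a) Q) (c : Finset α) (hc : c ∈ Q) (hjc : j ∈ c) :
    IsPt a ((insert (c.erase j) (Q.erase c)).erase ∅) := by
  obtain ⟨h1, h2, h3, h4⟩ := h
  have h5 : ∀ s ∈ Q, j ∈ s → s = c := fun s hs hjs => h4 s hs c hc j hjs hjc
  refine ⟨?_, ?_, ?_, ?_⟩
  · intro p hp x hx
    have := h1 p
    have := h1 c hc
    grind
  · grind
  · intro x hx
    obtain ⟨t, ht, hxt⟩ := h3 x (by simp [hx])
    by_cases htc : t = c
    · exact ⟨c.erase j, by grind, by grind⟩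
    · exact ⟨t, by grind, hxt⟩
  · intro s hs t ht x hxs hxt
    simp only [mem_insert, mem_erase] at hs ht
    have := h4 s
    have := h4 t
    grind

lemma sum_finpartition_insert {α : Type*} [DecidableEq α] {a : Finset α} {j : α}
    (hj : j ∉ a) (F : Finset (Finset α) → ℝ) :
    ∑ q : Finpartition (insert j a), F q.parts =
      ∑ p : Finpartition a, (F (insert {j} p.parts) +
        ∑ c ∈ p.parts, F (insert (insert j c) (p.parts.erase c))) := by
  have h0 : ∀ p : Finpartition a, (F (insert {j} p.parts) +
        ∑ c ∈ p.parts, F (insert (insert j c) (p.parts.erase c))) =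
        ∑ c ∈ insert ∅ p.parts, F (insert (insert j c) (p.parts.erase c)) := by
    intro p
    have : ∅ ∉ p.parts := p.bot_notMem
    rw [sum_insert this, erase_eq_of_notMem this]
    simp
  simp_rw [h0]
  rw [sum_sigma']
  symm
  refine sum_bij (fun x hx => (isPt_ext hj (isPt_parts x.1) x.2 (by simpa using hx)).mk)
    (fun _ _ => mem_univ _) ?_ ?_ ?_
  · rintro ⟨p, c⟩ hp ⟨q, d⟩ hq heq
    have heq := congrArg Finpartition.parts heq
    simp only [IsPt.mk_parts] at heq
    simp only [mem_sigma, mem_univ, true_and, mem_insert] at hp hq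
    have hP := isPt_parts p
    have hQ := isPt_parts q
    have hjp : ∀ s ∈ p.parts, j ∉ s := fun s hs hjs => hj (hP.1 s hs hjs)
    have hjq : ∀ s ∈ q.parts, j ∉ s := fun s hs hjs => hj (hQ.1 s hs hjs)
    have hjc : j ∉ c := by grind
    have hjd : j ∉ d := by grind
    have e1 : insert j c = insert j d := by
      have : insert j c ∈ insert (insert j d) (q.parts.erase d) := heq ▸ mem_insert_self _ _
      rw [mem_insert] at this
      rcases this with h | h
      · exact h
      · exact absurd (mem_insert_self j c) (hjq _ (mem_of_mem_erase h))
    have e2 : c = d := by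
      rw [← erase_insert hjc, e1, erase_insert hjd]
    subst e2
    have e3 : p.parts.erase c = q.parts.erase c := by
      have n1 : insert j c ∉ p.parts.erase c := fun h =>
        hjp _ (mem_of_mem_erase h) (mem_insert_self j c)
      have n2 : insert j c ∉ q.parts.erase c := fun h =>
        hjq _ (mem_of_mem_erase h) (mem_insert_self j c)
      rw [← erase_insert n1, heq, erase_insert n2]
    have e4 : p = q := by
      apply Finpartition.ext
      by_cases hc : c = ∅
      · subst hc
        rwa [erase_eq_of_notMem hP.2.1, erase_eq_of_notMem hQ.2.1] at e3
      · have hcp : c ∈ p.parts := by tauto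
        have hcq : c ∈ q.parts := by tauto
        rw [← insert_erase hcp, e3, insert_erase hcq]
    subst e4
    rfl
  · intro q _
    have hQ := isPt_parts q
    obtain ⟨c, hc, hjc⟩ := hQ.2.2.1 j (mem_insert_self _ _)
    have hce : c.erase j ∉ q.parts.erase c := by
      intro h
      rw [mem_erase] at h
      have hne : (c.erase j).Nonempty := nonempty_iff_ne_empty.2 (fun h' => hQ.2.1 (h' ▸ h.2))
      obtain ⟨x, hx⟩ := hne
      exact h.1 (hQ.2.2.2 _ h.2 c hc x hx (mem_of_mem_erase hx))
    refine ⟨⟨(isPt_res hj hQ c hc hjc).mk, c.erase j⟩, ?_, ?_⟩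
    · simp only [mem_sigma, mem_univ, true_and, IsPt.mk_parts]
      grind
    · apply Finpartition.ext
      simp only [IsPt.mk_parts]
      have h2 := hQ.2.1
      rw [erase_right_comm, erase_insert hce, insert_erase hjc, erase_eq_of_notMem (by grind),
        insert_erase hc]
  · rintro ⟨p, c⟩ hp
    rfl

/-- tilted integral -/
noncomputable def tilt {S : Type*} [MeasurableSpace S] (μ : MeasureTheory.Measure S) {n : ℕ}
    (X : Fin n → S → ℝ) (φ : S → ℝ) (γ : Fin n → ℝ) : ℝ :=
  ∫ s, φ s * Real.exp (∑ j, γ j * X j s) ∂μ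

section analysis
open MeasureTheory
variable {S : Type*} [MeasurableSpace S] (μ : Measure S) [IsProbabilityMeasure μ]
    {n : ℕ} (X : Fin n → S → ℝ)

lemma exp_bound (C : ℝ) (hC : ∀ j s, |X j s| ≤ C) (γ : Fin n → ℝ) (R : ℝ)
    (hR : ‖γ‖ ≤ R) (s : S) : Real.exp (∑ j, γ j * X j s) ≤ Real.exp (n * (R * C)) := by
  apply Real.exp_le_exp.2
  calc ∑ j, γ j * X j s ≤ ∑ j : Fin n, R * C := by
        apply sum_le_sum
        intro j _
        calc γ j * X j s ≤ |γ j| * |X j s| := by rw [← abs_mul]; exact le_abs_self _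
          _ ≤ R * C := by
            have h1 : |γ j| ≤ R := (norm_le_pi_norm γ j).trans hR
            have := hC j s
            have := abs_nonneg (γ j)
            gcongr
            linarith
    _ = n * (R * C) := by simp

lemma tilt_integrable (hmeas : ∀ j, Measurable (X j)) (C : ℝ) (hC : ∀ j s, |X j s| ≤ C)
    (φ : S → ℝ) (hφ : Measurable φ) (D : ℝ) (hD : ∀ s, |φ s| ≤ D) (γ : Fin n → ℝ) :
    Integrable (fun s => φ s * Real.exp (∑ j, γ j * X j s)) μ := by
  refine Integrable.of_bound (by fun_prop) (D * Real.exp (n * (‖γ‖ * C))) ?_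
  filter_upwards with s
  rw [norm_mul, Real.norm_eq_abs, Real.norm_eq_abs, Real.abs_exp]
  have := exp_bound X C hC γ _ le_rfl s
  have := hD s
  have := abs_nonneg (φ s)
  gcongr
  linarith

lemma tilt_hasFDerivAt (hmeas : ∀ j, Measurable (X j)) (C : ℝ) (hC : ∀ j s, |X j s| ≤ C)
    (φ : S → ℝ) (hφ : Measurable φ) (D : ℝ) (hD : ∀ s, |φ s| ≤ D) (γ : Fin n → ℝ) :
    HasFDerivAt (tilt μ X φ)
      (∑ j, tilt μ X (fun s => φ s * X j s) γ • (ContinuousLinearMap.proj j : (Fin n → ℝ) →L[ℝ] ℝ))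
      γ := by
  have hint := tilt_integrable μ X hmeas C hC
  have key := hasFDerivAt_integral_of_dominated_of_fderiv_le (𝕜 := ℝ) (μ := μ)
    (F := fun γ s => φ s * Real.exp (∑ j, γ j * X j s))
    (F' := fun γ s => ∑ j, (φ s * X j s * Real.exp (∑ j, γ j * X j s)) •
      (ContinuousLinearMap.proj j : (Fin n → ℝ) →L[ℝ] ℝ))
    (bound := fun _ => ∑ j : Fin n, (D * C * Real.exp (n * ((‖γ‖ + 1) * C))) *
      ‖(ContinuousLinearMap.proj j : (Fin n → ℝ) →L[ℝ] ℝ)‖)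
    (s := Metric.ball γ 1) (x₀ := γ) (Metric.ball_mem_nhds _ one_pos)
    ?_ ?_ ?_ ?_ (integrable_const _) ?_
  · refine key.congr_fderiv ?_
    rw [integral_finsetSum]
    · apply sum_congr rfl
      intro j _
      rw [integral_smul_const]
      rfl
    · intro j _
      apply Integrable.smul_const
      exact hint (fun s => φ s * X j s) (by fun_prop) (D * C) (fun s => by
        rw [abs_mul]; exact mul_le_mul (hD s) (hC j s) (abs_nonneg _) ((abs_nonneg _).trans (hD s))) γ
  · filter_upwards with x
    exact (hint φ hφ D hD x).aestronglyMeasurable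
  · exact hint φ hφ D hD γ
  · have : Measurable (fun s => ∑ j, (φ s * X j s * Real.exp (∑ j, γ j * X j s)) •
      (ContinuousLinearMap.proj j : (Fin n → ℝ) →L[ℝ] ℝ)) := by fun_prop
    exact this.aestronglyMeasurable
  · filter_upwards with s x hx
    refine (norm_sum_le _ _).trans (sum_le_sum fun j _ => ?_)
    rw [norm_smul, norm_mul, norm_mul, Real.norm_eq_abs, Real.norm_eq_abs, Real.norm_eq_abs,
      Real.abs_exp]
    have hx' : ‖x‖ ≤ ‖γ‖ + 1 := by
      have h1 : ‖x - γ‖ < 1 := by simpa [dist_eq_norm] using hx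
      have h2 := norm_le_norm_add_norm_sub γ x
      rw [norm_sub_rev] at h2
      linarith [norm_le_norm_add_norm_sub γ x]
    have h3 := exp_bound X C hC x _ hx' s
    have h4 := hD s
    have h5 := hC j s
    have := abs_nonneg (φ s)
    have := abs_nonneg (X j s)
    have hD0 : 0 ≤ D := by linarith
    have hC0 : 0 ≤ C := by linarith
    gcongr
  · filter_upwards with s x hx
    have h1 : HasFDerivAt (fun x : Fin n → ℝ => ∑ j, x j * X j s)
        (∑ j, X j s • (ContinuousLinearMap.proj j : (Fin n → ℝ) →L[ℝ] ℝ)) x := by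
      apply HasFDerivAt.fun_sum
      intro j _
      exact (hasFDerivAt_apply j x).mul_const _
    refine (h1.exp.const_mul (φ s)).congr_fderiv ?_
    rw [smul_sum, smul_sum]
    apply sum_congr rfl
    intro j _
    rw [smul_smul, smul_smul]
    congr 1
    ring

lemma tilt_contDiff (hmeas : ∀ j, Measurable (X j)) (C : ℝ) (hC : ∀ j s, |X j s| ≤ C)
    (k : ℕ) : ∀ (φ : S → ℝ) (_ : Measurable φ) (D : ℝ) (_ : ∀ s, |φ s| ≤ D),
    ContDiff ℝ k (tilt μ X φ) := by
  induction k with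
  | zero =>
    intro φ hφ D hD
    rw [Nat.cast_zero, contDiff_zero]
    exact continuous_iff_continuousAt.2 fun γ =>
      (tilt_hasFDerivAt μ X hmeas C hC φ hφ D hD γ).continuousAt
  | succ k ih =>
    intro φ hφ D hD
    have H := tilt_hasFDerivAt μ X hmeas C hC φ hφ D hD
    rw [Nat.cast_succ, contDiff_succ_iff_fderiv]
    refine ⟨fun γ => (H γ).differentiableAt, by simp, ?_⟩
    have : fderiv ℝ (tilt μ X φ) = fun γ => _ := funext fun γ => (H γ).fderiv
    rw [this]
    apply ContDiff.sum
    intro j _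
    refine (ih (fun s => φ s * X j s) (by fun_prop) (D * C) (fun s => ?_)).smul contDiff_const
    rw [abs_mul]; exact mul_le_mul (hD s) (hC j s) (abs_nonneg _) ((abs_nonneg _).trans (hD s))

/-- tilted moment -/
noncomputable def tm (a : Finset (Fin n)) (γ : Fin n → ℝ) : ℝ :=
  tilt μ X (fun s => ∏ j ∈ a, X j s) γ

lemma prod_bd (C : ℝ) (hC : ∀ j s, |X j s| ≤ C) (a : Finset (Fin n)) (s : S) :
    |∏ j ∈ a, X j s| ≤ C ^ a.card := by
  rw [abs_prod]
  calc ∏ j ∈ a, |X j s| ≤ ∏ j ∈ a, C := prod_le_prod (fun _ _ => abs_nonneg _) (fun j _ => hC j s)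
    _ = C ^ a.card := by simp

lemma tm_hasLineDerivAt (hmeas : ∀ j, Measurable (X j)) (C : ℝ) (hC : ∀ j s, |X j s| ≤ C)
    (a : Finset (Fin n)) (j : Fin n) (hj : j ∉ a) (γ : Fin n → ℝ) :
    HasLineDerivAt ℝ (tm μ X a) (tm μ X (insert j a) γ) γ (Pi.single j 1) := by
  have h1 := (tilt_hasFDerivAt μ X hmeas C hC (fun s => ∏ j ∈ a, X j s) (by fun_prop) _
    (prod_bd X C hC a) γ).hasLineDerivAt (Pi.single j 1)
  have e : (∑ i, tilt μ X (fun s => (∏ j ∈ a, X j s) * X i s) γ •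
      (ContinuousLinearMap.proj i : (Fin n → ℝ) →L[ℝ] ℝ)) (Pi.single j 1) =
      tm μ X (insert j a) γ := by
    simp only [ContinuousLinearMap.sum_apply, ContinuousLinearMap.smul_apply,
      ContinuousLinearMap.proj_apply, Pi.single_apply, smul_eq_mul, mul_ite, mul_one, mul_zero,
      sum_ite_eq', mem_univ, if_true, tm]
    congr 1
    funext s
    rw [prod_insert hj, mul_comm]
  rw [← e]
  exact h1

end analysis

lemma mixedPartial_insert {n : ℕ} (g : (Fin n → ℝ) → ℝ) (hg : ContDiff ℝ (⊤ : ℕ∞) g)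
    (a : Finset (Fin n)) (j : Fin n) (hj : ∀ x ∈ a, j < x) (γ : Fin n → ℝ) :
    HasLineDerivAt ℝ (mixedPartial g a) (mixedPartial g (insert j a) γ) γ (Pi.single j 1) := by
  have hja : j ∉ a := fun h => lt_irrefl _ (hj j h)
  have hcard : (insert j a).card = a.card + 1 := card_insert_of_notMem hja
  have e1 : ∀ k (hk : (insert j a).card = k), mixedPartial g (insert j a) γ =
      iteratedFDeriv ℝ k g γ (fun i => Pi.single ((insert j a).orderEmbOfFin hk i) 1) := by
    intro k hk; subst hk; rfl
  have e2 : (Fin.cons j (a.orderEmbOfFin rfl) : Fin (a.card + 1) → Fin n) =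
      (insert j a).orderEmbOfFin hcard := by
    apply orderEmbOfFin_unique
    · intro x
      refine Fin.cases ?_ (fun i => ?_) x
      · simp
      · simp
    · exact Fin.strictMono_cons.2 ⟨fun i => hj _ (orderEmbOfFin_mem _ _ _), OrderEmbedding.strictMono _⟩
  rw [e1 _ hcard, iteratedFDeriv_succ_apply_left]
  have hd : DifferentiableAt ℝ (iteratedFDeriv ℝ a.card g) γ :=
    hg.differentiable_iteratedFDeriv (by exact_mod_cast WithTop.coe_lt_top _) γ
  have h1 := (hd.hasFDerivAt.hasLineDerivAt (Pi.single j 1))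
  have h2 := ((ContinuousMultilinearMap.apply ℝ (fun _ : Fin a.card => Fin n → ℝ) ℝ
    (fun i => Pi.single (a.orderEmbOfFin rfl i) 1)).hasFDerivAt.comp γ hd.hasFDerivAt)
  have h3 := h2.hasLineDerivAt (Pi.single j 1)
  rw [← e2]
  exact h3

lemma card_fac (F : ℝ) (k : ℕ) (hk : k ≠ 0) :
    ((k - 1).factorial : ℝ) * (-1) ^ (k - 1) * (- (k * F)) = (k.factorial : ℝ) * (-1) ^ k * F := by
  obtain ⟨m, rfl⟩ := Nat.exists_eq_succ_of_ne_zero hk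
  simp only [Nat.succ_eq_add_one, Nat.add_sub_cancel, Nat.factorial_succ, pow_succ]
  push_cast
  ring

section main
open MeasureTheory
variable {S : Type*} [MeasurableSpace S] (μ : Measure S) [IsProbabilityMeasure μ]
    {n : ℕ} (X : Fin n → S → ℝ)

/-- term -/
noncomputable def cterm (γ : Fin n → ℝ) (P : Finset (Finset (Fin n))) : ℝ :=
  (Nat.factorial (P.card - 1) : ℝ) * (-1 : ℝ) ^ (P.card - 1) *
    ((∏ c ∈ P, tm μ X c γ) * (tm μ X ∅ γ ^ P.card)⁻¹)

lemma cterm_hasLineDerivAt (hmeas : ∀ j, Measurable (X j)) (C : ℝ) (hC : ∀ j s, |X j s| ≤ C)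
    (γ : Fin n → ℝ) (hpos : tm μ X ∅ γ ≠ 0)
    (a : Finset (Fin n)) (ha : a.Nonempty) (j : Fin n) (hj : j ∉ a) (p : Finpartition a) :
    HasLineDerivAt ℝ (fun γ => cterm μ X γ p.parts)
      (cterm μ X γ (insert {j} p.parts) +
        ∑ c ∈ p.parts, cterm μ X γ (insert (insert j c) (p.parts.erase c))) γ (Pi.single j 1) := by
  have hjp : ∀ s ∈ p.parts, j ∉ s := fun s hs hjs => hj (p.le hs hjs)
  have hk : p.parts.card ≠ 0 := by
    rw [Ne, card_eq_zero]; exact (p.parts_nonempty ha.ne_empty).ne_empty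
  have H : ∀ c, j ∉ c → HasDerivAt (fun t : ℝ => tm μ X c (γ + t • Pi.single j 1))
      (tm μ X (insert j c) γ) 0 := fun c hc => tm_hasLineDerivAt μ X hmeas C hC c j hc γ
  have hp := HasDerivAt.fun_finsetProd (u := p.parts) (fun c hc => H c (hjp c hc))
  have hq := ((H ∅ (by simp)).fun_pow p.parts.card).fun_inv (by rw [zero_smul, add_zero]; exact pow_ne_zero _ hpos)
  have hr := (hp.fun_mul hq).const_mul
    ((Nat.factorial (p.parts.card - 1) : ℝ) * (-1 : ℝ) ^ (p.parts.card - 1))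
  unfold HasLineDerivAt
  refine hr.congr_deriv ?_
  simp only [zero_smul, add_zero, smul_eq_mul]
  have c1 : ∀ c ∈ p.parts, cterm μ X γ (insert (insert j c) (p.parts.erase c)) =
      (Nat.factorial (p.parts.card - 1) : ℝ) * (-1 : ℝ) ^ (p.parts.card - 1) *
      (((∏ d ∈ p.parts.erase c, tm μ X d γ) * tm μ X (insert j c) γ) *
        (tm μ X ∅ γ ^ p.parts.card)⁻¹) := by
    intro c hc
    have n1 : insert j c ∉ p.parts.erase c := fun h =>
        hjp _ (mem_of_mem_erase h) (mem_insert_self j c)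
    have : (p.parts.erase c).card + 1 = p.parts.card := card_erase_add_one hc
    unfold cterm
    rw [card_insert_of_notMem n1, this, prod_insert n1, mul_comm (tm μ X (insert j c) γ)]
  rw [sum_congr rfl c1, ← mul_sum, ← sum_mul, mul_add, add_comm]
  congr 1
  have n2 : {j} ∉ p.parts := fun h => hjp _ h (mem_singleton_self j)
  unfold cterm
  rw [card_insert_of_notMem n2, prod_insert n2, Nat.add_sub_cancel]
  rw [← card_fac _ _ hk]
  obtain ⟨m, hm⟩ := Nat.exists_eq_succ_of_ne_zero hk
  rw [hm]
  simp only [Nat.succ_eq_add_one, Nat.add_sub_cancel, insert_empty_eq]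
  congr 1
  field_simp
  ring

lemma mixedPartial_log (hmeas : ∀ j, Measurable (X j)) (C : ℝ) (hC : ∀ j s, |X j s| ≤ C)
    (hpos : ∀ γ, 0 < tm μ X ∅ γ)
    (hsm : ContDiff ℝ (⊤ : ℕ∞) (fun γ => Real.log (tm μ X ∅ γ))) (a : Finset (Fin n)) :
    a.Nonempty → ∀ γ, mixedPartial (fun γ => Real.log (tm μ X ∅ γ)) a γ =
      ∑ p : Finpartition a, cterm μ X γ p.parts := by
  induction a using Finset.induction_on_min with
  | empty => intro h; simp at h
  | insert j a hj ih =>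
    intro _ γ
    have hja : j ∉ a := fun h => lt_irrefl _ (hj j h)
    have h1 := mixedPartial_insert _ hsm a j hj γ
    rw [sum_finpartition_insert hja (cterm μ X γ)]
    rcases a.eq_empty_or_nonempty with rfl | ha
    · have h0 : mixedPartial (fun γ => Real.log (tm μ X ∅ γ)) ∅ =
          fun γ => Real.log (tm μ X ∅ γ) := by
        funext γ
        exact iteratedFDeriv_zero_apply _
      rw [h0] at h1
      have h2 : HasLineDerivAt ℝ (fun γ => Real.log (tm μ X ∅ γ))
          (tm μ X {j} γ / tm μ X ∅ γ) γ (Pi.single j 1) := by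
        have h3 := tm_hasLineDerivAt μ X hmeas C hC ∅ j (by simp) γ
        unfold HasLineDerivAt at h3 ⊢
        simpa using h3.log (by simpa using (hpos γ).ne')
      rw [h1.unique h2]
      have hp : ∀ p : Finpartition (∅ : Finset (Fin n)), p.parts = ∅ := fun p =>
        p.parts_eq_empty_iff.2 rfl
      have : ∀ p : Finpartition (∅ : Finset (Fin n)), (cterm μ X γ (insert {j} p.parts) +
        ∑ c ∈ p.parts, cterm μ X γ (insert (insert j c) (p.parts.erase c))) =
          tm μ X {j} γ / tm μ X ∅ γ := by
        intro p
        rw [hp]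
        simp [cterm, div_eq_mul_inv]
      rw [sum_congr rfl (fun p _ => this p)]
      have : Fintype.card (Finpartition (∅ : Finset (Fin n))) = 1 := by
        rw [Fintype.card_eq_one_iff]
        exact ⟨Finpartition.empty _, fun p => Finpartition.ext (by rw [hp, hp])⟩
      simp [this]
    · have h2 : mixedPartial (fun γ => Real.log (tm μ X ∅ γ)) a =
          fun γ => ∑ p : Finpartition a, cterm μ X γ p.parts := funext (ih ha)
      rw [h2] at h1
      refine h1.unique ?_
      have h3 := fun p => cterm_hasLineDerivAt μ X hmeas C hC γ (hpos γ).ne' a ha j hja p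
      unfold HasLineDerivAt at h3 ⊢
      exact HasDerivAt.fun_sum (fun p _ => h3 p)

end main

open MeasureTheory

/-- For bounded measurable random variables `X_1, …, X_n` on a probability space,
the moment generating function `h(γ) = E[exp(∑_j γ_j X_j)]` is smooth and
positive, and for every nonempty `a` the mixed partial of `log ∘ h` at `γ = 0`
along the coordinates in `a` equals the cumulant
`log* f(a) = ∑_p (|p|−1)!(−1)^{|p|−1} ∏_{c∈p} f(c)` of the moment M-map
`f(a) = E[∏_{j∈a} X_j]`. -/
theorem cumulant_eq_mixedPartial_log_mgf (S : Type*) [MeasurableSpace S]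
    (μ : Measure S) [IsProbabilityMeasure μ]
    (n : ℕ) (X : Fin n → S → ℝ)
    (hmeas : ∀ j, Measurable (X j)) (hbdd : ∀ j, ∃ C : ℝ, ∀ s, |X j s| ≤ C)
    (f : Finset (Fin n) → ℝ) (hf : ∀ a : Finset (Fin n), f a = ∫ s, (∏ j ∈ a, X j s) ∂μ)
    (h : (Fin n → ℝ) → ℝ)
    (hh : ∀ γ : Fin n → ℝ, h γ = ∫ s, Real.exp (∑ j, γ j * X j s) ∂μ) :
    ContDiff ℝ (⊤ : ℕ∞) h ∧ (∀ γ, 0 < h γ) ∧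
    ∀ a : Finset (Fin n), a.Nonempty →
      mixedPartial (fun γ => Real.log (h γ)) a 0 =
        ∑ p : Finpartition a,
          (Nat.factorial (p.parts.card - 1) : ℝ) * (-1 : ℝ) ^ (p.parts.card - 1) *
            ∏ c ∈ p.parts, f c := by
  obtain ⟨C, hC⟩ : ∃ C : ℝ, ∀ j s, |X j s| ≤ C := by
    choose D hD using hbdd
    refine ⟨∑ j, |D j|, fun j s => ?_⟩
    exact ((hD j s).trans (le_abs_self _)).trans
      (single_le_sum (f := fun j => |D j|) (fun _ _ => abs_nonneg _) (mem_univ j))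
  have hhe : h = tm μ X ∅ := by
    funext γ
    rw [hh]
    simp [tm, tilt]
  have hsm : ContDiff ℝ (⊤ : ℕ∞) h := by
    rw [hhe, contDiff_infty]
    intro k
    exact tilt_contDiff μ X hmeas C hC k _ (by fun_prop) _ (prod_bd X C hC ∅)
  have hpos : ∀ γ, 0 < h γ := by
    intro γ
    rw [hh]
    refine integral_exp_pos ?_
    simpa using tilt_integrable μ X hmeas C hC (fun _ => 1) (by fun_prop) 1 (by simp) γ
  refine ⟨hsm, hpos, fun a ha => ?_⟩
  have hlog : ContDiff ℝ (⊤ : ℕ∞) (fun γ => Real.log (h γ)) := hsm.log (fun γ => (hpos γ).ne')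
  have hf0 : ∀ c, tm μ X c 0 = f c := by
    intro c
    rw [hf]
    simp [tm, tilt]
  have hfe : f ∅ = 1 := by rw [hf]; simp
  rw [hhe] at hpos hlog ⊢
  rw [mixedPartial_log μ X hmeas C hC hpos hlog a ha 0]
  refine sum_congr rfl fun p _ => ?_
  simp [cterm, hf0, hfe]
end
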